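/- arXiv:math/9205206 — 4 statements merged into one kernel-verified Lean document; each statement's English description precedes it below -/
import Mathlib

section
/- Let 𝒜 be an algebra of subsets of a set Ω and let 1 < p < ∞. If φ : 𝒜 → ℝ is a normalized submeasure which satisfies a lower p-estimate, then there exists a finitely additive measure λ on 𝒜 with 0 ≤ λ(A) ≤ φ(A) for all A ∈ 𝒜 and λ(Ω) ≥ K_p, where K_p = 2(2^p − 1)^{−1/p} − 1. -/
open Set Filter Topology

def SMCov {Ω : Type*} (𝒜 : Set (Set Ω)) (φ : Set Ω → ℝ) (f : Ω → ℝ) (r : ℝ) : Prop :=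
  ∃ c : Set Ω →₀ ℝ, (∀ A, 0 ≤ c A) ∧ (∀ A ∈ c.support, A ∈ 𝒜) ∧
    (∀ x, f x ≤ c.sum fun A w => w * A.indicator (fun _ => (1 : ℝ)) x) ∧
    r = c.sum fun A w => w * φ A

lemma SMCov.nonneg {Ω : Type*} {𝒜 : Set (Set Ω)} {φ : Set Ω → ℝ} (h0 : ∀ A ∈ 𝒜, 0 ≤ φ A)
    {f : Ω → ℝ} {r : ℝ} (h : SMCov 𝒜 φ f r) : 0 ≤ r := by
  obtain ⟨c, h1, h2, h3, rfl⟩ := h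
  exact Finset.sum_nonneg fun A hA => mul_nonneg (h1 A) (h0 A (h2 A hA))

lemma SMCov.add {Ω : Type*} {𝒜 : Set (Set Ω)} {φ : Set Ω → ℝ}
    {f g : Ω → ℝ} {r s : ℝ} (h : SMCov 𝒜 φ f r) (h' : SMCov 𝒜 φ g s) :
    SMCov 𝒜 φ (f + g) (r + s) := by
  classical
  obtain ⟨c, h1, h2, h3, rfl⟩ := h
  obtain ⟨d, k1, k2, k3, rfl⟩ := h'
  refine ⟨c + d, fun A => add_nonneg (h1 A) (k1 A), fun A hA => ?_, fun x => ?_, ?_⟩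
  · rcases Finset.mem_union.1 (Finsupp.support_add hA) with h | h
    · exact h2 A h
    · exact k2 A h
  · rw [Finsupp.sum_add_index' (by simp) (by intros; ring)]
    exact add_le_add (h3 x) (k3 x)
  · rw [Finsupp.sum_add_index' (by simp) (by intros; ring)]

lemma SMCov.smul {Ω : Type*} {𝒜 : Set (Set Ω)} {φ : Set Ω → ℝ}
    {f : Ω → ℝ} {r : ℝ} (h : SMCov 𝒜 φ f r) {k : ℝ} (hk : 0 ≤ k) :
    SMCov 𝒜 φ (k • f) (k * r) := by
  classical
  obtain ⟨c, h1, h2, h3, rfl⟩ := h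
  refine ⟨k • c, fun A => mul_nonneg hk (h1 A), fun A hA => h2 A (Finsupp.support_smul hA),
    fun x => ?_, ?_⟩
  · rw [Finsupp.sum_smul_index (by simp)]
    have := mul_le_mul_of_nonneg_left (h3 x) hk
    simp only [Finsupp.mul_sum] at this
    simpa [mul_assoc] using this
  · rw [Finsupp.sum_smul_index (by simp), Finsupp.mul_sum]
    simp [mul_assoc]

lemma SMCov.of_le {Ω : Type*} {𝒜 : Set (Set Ω)} {φ : Set Ω → ℝ} {A : Set Ω} (hA : A ∈ 𝒜)
    {k : ℝ} (hk : 0 ≤ k) {f : Ω → ℝ} (hf : ∀ x, f x ≤ k * A.indicator (fun _ => (1 : ℝ)) x) :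
    SMCov 𝒜 φ f (k * φ A) := by
  classical
  refine ⟨Finsupp.single A k, fun B => ?_, fun B hB => ?_, fun x => ?_, ?_⟩
  · rw [Finsupp.single_apply]; split_ifs <;> simp [hk]
  · have := Finsupp.support_single_subset hB
    rw [Finset.mem_singleton] at this
    exact this ▸ hA
  · rw [Finsupp.sum_single_index (by simp)]; exact hf x
  · rw [Finsupp.sum_single_index (by simp)]

lemma sm_hb {Ω : Type*} [Nonempty Ω] (𝒜 : Set (Set Ω)) (h_univ : (univ : Set Ω) ∈ 𝒜)
    (φ : Set Ω → ℝ) (h0 : ∀ A ∈ 𝒜, 0 ≤ φ A) (κ : ℝ) (hκ : 0 ≤ κ)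
    (hcov : ∀ r, SMCov 𝒜 φ (fun _ => 1) r → κ ≤ r) :
    ∃ lam : Set Ω → ℝ, (∀ A B, Disjoint A B → lam (A ∪ B) = lam A + lam B) ∧
      (∀ A, 0 ≤ lam A) ∧ (∀ A ∈ 𝒜, lam A ≤ φ A) ∧ lam univ = κ ∧
      ∀ (s : Finset (Set Ω)) (c : Set Ω → ℝ) (R : Set Ω),
        (∀ x ∈ R, 1 ≤ ∑ A ∈ s, c A * A.indicator (fun _ => (1 : ℝ)) x) →
        lam R ≤ ∑ A ∈ s, c A * lam (A ∩ R) := by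
  classical
  let E : Submodule ℝ (Ω → ℝ) :=
    { carrier := {f | ∃ M, ∀ x, |f x| ≤ M}
      add_mem' := by
        rintro f g ⟨M, hM⟩ ⟨N, hN⟩
        exact ⟨M + N, fun x => (abs_add_le _ _).trans (add_le_add (hM x) (hN x))⟩
      zero_mem' := ⟨0, by simp⟩
      smul_mem' := by
        rintro k f ⟨M, hM⟩
        exact ⟨|k| * M, fun x => by
          simpa [abs_mul] using mul_le_mul_of_nonneg_left (hM x) (abs_nonneg k)⟩ }
  have hind : ∀ A : Set Ω, A.indicator (fun _ => (1 : ℝ)) ∈ E := fun A =>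
    ⟨1, fun x => by by_cases h : x ∈ A <;> simp [h]⟩
  let I : Set Ω → E := fun A => ⟨A.indicator (fun _ => (1 : ℝ)), hind A⟩
  let P : E → ℝ := fun f => sInf {r | SMCov 𝒜 φ f r}
  have hbdd : ∀ f : E, BddBelow {r | SMCov 𝒜 φ f r} := fun f => ⟨0, fun r hr => hr.nonneg h0⟩
  have hne : ∀ f : E, {r | SMCov 𝒜 φ f r}.Nonempty := by
    rintro ⟨f, M, hM⟩
    refine ⟨_, SMCov.of_le h_univ (k := |M|) (abs_nonneg _) fun x => ?_⟩
    simpa using (le_abs_self _).trans ((hM x).trans (le_abs_self M))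
  have hPle : ∀ (f : E) r, SMCov 𝒜 φ f r → P f ≤ r := fun f r h => csInf_le (hbdd f) h
  have hP0 : ∀ f : E, 0 ≤ P f := fun f => le_csInf (hne f) fun r hr => hr.nonneg h0
  have hPadd : ∀ f g : E, P (f + g) ≤ P f + P g := by
    intro f g
    refine le_of_forall_pos_le_add fun ε hε => ?_
    obtain ⟨r, hr, hr'⟩ := exists_lt_of_csInf_lt (hne f) (show P f < P f + ε / 2 by linarith)
    obtain ⟨s, hs, hs'⟩ := exists_lt_of_csInf_lt (hne g) (show P g < P g + ε / 2 by linarith)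
    have := hPle (f + g) (r + s) (SMCov.add hr hs)
    linarith
  have hPs : ∀ (k : ℝ), 0 < k → ∀ f : E, P (k • f) ≤ k * P f := by
    intro k hk f
    rw [← div_le_iff₀' hk]
    refine le_csInf (hne f) fun r hr => ?_
    rw [div_le_iff₀' hk]
    exact hPle (k • f) _ (SMCov.smul hr hk.le)
  have hPhom : ∀ (k : ℝ), 0 < k → ∀ f : E, P (k • f) = k * P f := by
    intro k hk f
    refine le_antisymm (hPs k hk f) ?_
    have := hPs k⁻¹ (inv_pos.2 hk) (k • f)
    rw [smul_smul, inv_mul_cancel₀ hk.ne', one_smul] at this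
    have h2 := mul_le_mul_of_nonneg_left this hk.le
    rwa [← mul_assoc, mul_inv_cancel₀ hk.ne', one_mul] at h2
  have hI1 : I univ ≠ 0 := by
    intro h
    have := congrArg (fun f : E => (f : Ω → ℝ) (Classical.arbitrary Ω)) h
    simp [I] at this
  have hκP : κ ≤ P (I univ) := le_csInf (hne _) fun r hr => hcov r (by simpa [I] using hr)
  obtain ⟨L, hL1, hL2⟩ := exists_extension_of_le_sublinear
    (LinearPMap.mkSpanSingleton (K := ℝ) (I univ) κ hI1) P hPhom hPadd (by
      rintro ⟨x, hx⟩
      obtain ⟨k, rfl⟩ := Submodule.mem_span_singleton.1 hx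
      have e : (LinearPMap.mkSpanSingleton (K := ℝ) (I univ) κ hI1) ⟨k • I univ, hx⟩ = k * κ :=
        LinearPMap.mkSpanSingleton'_apply _ _ _ _ _
      rw [e]
      rcases lt_or_ge 0 k with hk | hk
      · rw [hPhom k hk]; exact mul_le_mul_of_nonneg_left hκP hk.le
      · exact (mul_nonpos_of_nonpos_of_nonneg hk hκ).trans (hP0 _))
  have hLpos : ∀ f : E, (∀ x, 0 ≤ (f : Ω → ℝ) x) → 0 ≤ L f := by
    intro f hf
    have h1 := hL2 (-f)
    have h2 : P (-f) ≤ 0 := by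
      have := hPle (-f) _ (SMCov.of_le h_univ (k := 0) le_rfl fun x => by simpa using hf x)
      simpa using this
    rw [map_neg] at h1
    linarith
  refine ⟨fun A => L (I A), ?_, ?_, ?_, ?_, ?_⟩
  · intro A B hAB
    have e : I (A ∪ B) = I A + I B := by
      apply Subtype.ext
      simp only [I, Submodule.coe_add, indicator_union_of_disjoint hAB]
      rfl
    show L (I (A ∪ B)) = L (I A) + L (I B)
    rw [e, map_add]
  · intro A
    exact hLpos _ fun x => indicator_nonneg (fun _ _ => zero_le_one) x
  · intro A hA
    have := hPle (I A) _ (SMCov.of_le hA (k := 1) zero_le_one fun x => by simp [I])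
    simpa using (hL2 _).trans this
  · have := hL1 ⟨I univ, Submodule.mem_span_singleton_self _⟩
    refine this.trans ?_
    exact LinearPMap.mkSpanSingleton_apply ℝ ℝ hI1 κ
  · intro s c R h
    have : 0 ≤ L (∑ A ∈ s, c A • I (A ∩ R) - I R) := by
      apply hLpos
      intro x
      by_cases hx : x ∈ R
      · have := h x hx
        simp only [I, Submodule.coe_sub, Submodule.coe_sum, Submodule.coe_smul, Pi.sub_apply,
          Finset.sum_apply, Pi.smul_apply, smul_eq_mul, sub_nonneg]
        simpa [indicator, hx] using this
      · simp [I, hx]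
    rw [map_sub, map_sum] at this
    simpa using this

/-- Finite subalgebra. -/
lemma sm_fin {Ω : Type*} (𝒜 : Set (Set Ω))
    (h_empty : (∅ : Set Ω) ∈ 𝒜) (h_univ : (univ : Set Ω) ∈ 𝒜)
    (h_compl : ∀ A ∈ 𝒜, Aᶜ ∈ 𝒜)
    (h_union : ∀ A ∈ 𝒜, ∀ B ∈ 𝒜, A ∪ B ∈ 𝒜) (s : Finset (Set Ω)) (hs : ∀ A ∈ s, A ∈ 𝒜) :
    ∃ ℬ : Finset (Set Ω), (∀ A ∈ ℬ, A ∈ 𝒜) ∧ (∀ A ∈ s, A ∈ ℬ) ∧ ∅ ∈ ℬ ∧ univ ∈ ℬ ∧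
      (∀ A ∈ ℬ, Aᶜ ∈ ℬ) ∧ (∀ A ∈ ℬ, ∀ B ∈ ℬ, A ∪ B ∈ ℬ) := by
  classical
  induction s using Finset.induction_on with
  | empty =>
    refine ⟨{∅, univ}, ?_, ?_, ?_, ?_, ?_, ?_⟩ <;> simp [h_empty, h_univ]
  | insert S s _ ih =>
    obtain ⟨ℬ, b1, b2, b3, b4, b5, b6⟩ := ih fun A hA => hs A (Finset.mem_insert_of_mem hA)
    have hS : S ∈ 𝒜 := hs S (Finset.mem_insert_self _ _)
    have h_inter : ∀ A ∈ 𝒜, ∀ B ∈ 𝒜, A ∩ B ∈ 𝒜 := by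
      intro A hA B hB
      have := h_compl _ (h_union _ (h_compl A hA) _ (h_compl B hB))
      rwa [compl_union, compl_compl, compl_compl] at this
    have key : ∀ T, T ∈ Finset.image₂ (fun X Y => (X ∩ S) ∪ (Y ∩ Sᶜ)) ℬ ℬ ↔
        ∃ X ∈ ℬ, ∃ Y ∈ ℬ, (X ∩ S) ∪ (Y ∩ Sᶜ) = T := fun T => by simp
    refine ⟨Finset.image₂ (fun X Y => (X ∩ S) ∪ (Y ∩ Sᶜ)) ℬ ℬ, ?_, ?_, ?_, ?_, ?_, ?_⟩ <;>
      simp only [key]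
    · rintro _ ⟨X, hX, Y, hY, rfl⟩
      exact h_union _ (h_inter _ (b1 X hX) _ hS) _ (h_inter _ (b1 Y hY) _ (h_compl _ hS))
    · intro A hA
      rcases Finset.mem_insert.1 hA with rfl | hA
      · exact ⟨univ, b4, ∅, b3, by simp⟩
      · exact ⟨A, b2 A hA, A, b2 A hA, by rw [← inter_union_distrib_left]; simp⟩
    · exact ⟨∅, b3, ∅, b3, by simp⟩
    · exact ⟨univ, b4, univ, b4, by simp⟩
    · rintro _ ⟨X, hX, Y, hY, rfl⟩
      refine ⟨Xᶜ, b5 X hX, Yᶜ, b5 Y hY, ?_⟩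
      ext x; simp; tauto
    · rintro _ ⟨X, hX, Y, hY, rfl⟩ _ ⟨X', hX', Y', hY', rfl⟩
      refine ⟨X ∪ X', b6 X hX X' hX', Y ∪ Y', b6 Y hY Y' hY', ?_⟩
      ext x; simp; tauto

/-- attained minimum -/
lemma sm_min {Ω : Type*} (ℬ : Finset (Set Ω)) (h_univ : univ ∈ ℬ)
    (φ : Set Ω → ℝ) (h0 : ∀ A ∈ ℬ, 0 ≤ φ A) :
    ∃ c : Set Ω → ℝ, (∀ A, 0 ≤ c A) ∧
      (∀ x, 1 ≤ ∑ A ∈ ℬ, c A * A.indicator (fun _ => (1 : ℝ)) x) ∧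
      ∀ r, SMCov (ℬ : Set (Set Ω)) φ (fun _ => 1) r → ∑ A ∈ ℬ, c A * φ A ≤ r := by
  classical
  let K : Set (Set Ω → ℝ) := (univ.pi fun _ => Icc (0 : ℝ) 1) ∩
    ⋂ x, {c | 1 ≤ ∑ A ∈ ℬ, c A * A.indicator (fun _ => (1 : ℝ)) x}
  have hK : IsCompact K := by
    refine (isCompact_univ_pi fun _ => isCompact_Icc).inter_right ?_
    refine isClosed_iInter fun x => isClosed_le continuous_const ?_
    fun_prop
  have hKne : K.Nonempty := by
    refine ⟨fun _ => 1, fun A _ => by simp, mem_iInter.2 fun x => ?_⟩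
    have := Finset.single_le_sum (f := fun A : Set Ω => (1 : ℝ) * A.indicator (fun _ => (1 : ℝ)) x)
      (fun A _ => by simpa using indicator_nonneg (by simp) x) h_univ
    simpa using this
  obtain ⟨c, hc, hmin⟩ := hK.exists_isMinOn hKne
    (f := fun c : Set Ω → ℝ => ∑ A ∈ ℬ, c A * φ A) (by fun_prop)
  refine ⟨c, fun A => (hc.1 A trivial).1, fun x => mem_iInter.1 hc.2 x, ?_⟩
  rintro r ⟨d, d1, d2, d3, rfl⟩
  have hsub : d.support ⊆ ℬ := fun A hA => by simpa using d2 A hA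
  rw [Finsupp.sum_of_support_subset _ hsub _ (by simp)]
  have hd : (fun A => min (d A) 1) ∈ K := by
    refine ⟨fun A _ => ⟨le_min (d1 A) zero_le_one, min_le_right _ _⟩, mem_iInter.2 fun x => ?_⟩
    have h3 := d3 x
    rw [Finsupp.sum_of_support_subset _ hsub _ (by simp)] at h3
    rw [Set.mem_ofPred_eq]
    by_cases hb : ∃ A ∈ ℬ, x ∈ A ∧ 1 ≤ d A
    · obtain ⟨A, hA, hx, h1⟩ := hb
      have := Finset.single_le_sum
        (f := fun A : Set Ω => min (d A) 1 * A.indicator (fun _ => (1 : ℝ)) x)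
        (fun A _ => mul_nonneg (le_min (d1 A) zero_le_one) (indicator_nonneg (by simp) x)) hA
      simpa [hx, h1] using this
    · push Not at hb
      refine h3.trans (Finset.sum_le_sum fun A hA => ?_)
      by_cases hx : x ∈ A
      · simp [hx, (hb A hA hx).le]
      · simp [hx]
  refine (isMinOn_iff.1 hmin _ hd).trans (Finset.sum_le_sum fun A hA => ?_)
  exact mul_le_mul_of_nonneg_right (min_le_left _ _) (h0 A hA)


/-- pointwise estimate -/
lemma sm_pt {p a e x y : ℝ} (hp : 1 < p) (hx : 0 ≤ x) (he : 0 ≤ e)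
    (hea : e ≤ a) (hy : a - e ≤ y) (h : y ^ p + x ^ p ≤ a ^ p) :
    x ≤ p ^ (1 / p) * (a ^ (1 - 1 / p) * e ^ (1 / p)) := by
  have hp0 : 0 < p := by linarith
  have ha : 0 ≤ a := he.trans hea
  have h1 : x ^ p ≤ p * (a ^ (p - 1) * e) := by
    rcases ha.eq_or_lt with rfl | ha
    · have : e = 0 := le_antisymm hea he
      subst this
      rw [Real.zero_rpow hp0.ne'] at h
      have : 0 ≤ y ^ p := Real.rpow_nonneg (by linarith) p
      simp; linarith
    · have h2 : (a - e) ^ p ≤ y ^ p := Real.rpow_le_rpow (by linarith) hy hp0.le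
      have h3 := one_add_mul_self_le_rpow_one_add (s := -(e / a)) (by
        rw [neg_le_neg_iff, div_le_one ha]; exact hea) hp.le
      have h4 : a - e = a * (1 + -(e / a)) := by field_simp; ring
      have h5 : 0 ≤ 1 + -(e / a) := by
        have : e / a ≤ 1 := (div_le_one ha).2 hea
        linarith
      rw [h4, Real.mul_rpow ha.le h5] at h2
      have h6 := mul_le_mul_of_nonneg_left h3 (Real.rpow_nonneg ha.le p)
      have h7 : a ^ (p - 1) * e = a ^ p * (e / a) := by
        rw [Real.rpow_sub_one ha.ne']; ring
      rw [h7]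
      nlinarith
  have h2 := Real.rpow_le_rpow (Real.rpow_nonneg hx p) h1 (by positivity : 0 ≤ 1 / p)
  rw [← Real.rpow_mul hx, mul_one_div_cancel hp0.ne', Real.rpow_one,
    Real.mul_rpow hp0.le (by positivity), Real.mul_rpow (by positivity) he,
    ← Real.rpow_mul ha] at h2
  rwa [show (p - 1) * (1 / p) = 1 - 1 / p by field_simp] at h2

lemma sm_holder {ι : Type*} (s : Finset ι) (c a e : ι → ℝ) {p : ℝ} (hp : 1 < p)
    (hc : ∀ i ∈ s, 0 ≤ c i) (ha : ∀ i ∈ s, 0 ≤ a i) (he : ∀ i ∈ s, 0 ≤ e i) :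
    ∑ i ∈ s, c i * (a i ^ (1 - 1 / p) * e i ^ (1 / p)) ≤
      (∑ i ∈ s, c i * a i) ^ (1 - 1 / p) * (∑ i ∈ s, c i * e i) ^ (1 / p) := by
  have hp0 : 0 < p := by linarith
  have hp1 : 1 / p < 1 := by rw [div_lt_one hp0]; exact hp
  have hq : (1 - 1 / p) ≠ 0 := by linarith
  have hpq : Real.HolderConjugate (1 - 1 / p)⁻¹ p := by
    rw [Real.holderConjugate_iff]
    refine ⟨(one_lt_inv₀ (by linarith)).2 (by have : 0 < 1 / p := by positivity
                                              linarith), ?_⟩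
    rw [inv_inv]; ring
  have := Real.inner_le_Lp_mul_Lq_of_nonneg s (f := fun i => (c i * a i) ^ (1 - 1 / p))
    (g := fun i => (c i * e i) ^ (1 / p)) hpq
    (fun i hi => Real.rpow_nonneg (mul_nonneg (hc i hi) (ha i hi)) _)
    (fun i hi => Real.rpow_nonneg (mul_nonneg (hc i hi) (he i hi)) _)
  rw [one_div (1 - 1 / p)⁻¹, inv_inv] at this
  refine le_of_eq_of_le (Finset.sum_congr rfl fun i hi => ?_) (this.trans_eq ?_)
  · rw [Real.mul_rpow (hc i hi) (ha i hi), Real.mul_rpow (hc i hi) (he i hi)]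
    have : c i = c i ^ (1 - 1 / p) * c i ^ (1 / p) := by
      rw [← Real.rpow_add' (hc i hi) (by simp)]; simp
    nth_rewrite 1 [this]; ring
  · congr 2
    · refine Finset.sum_congr rfl fun i hi => ?_
      rw [← Real.rpow_mul (mul_nonneg (hc i hi) (ha i hi)), mul_inv_cancel₀ hq, Real.rpow_one]
    · refine Finset.sum_congr rfl fun i hi => ?_
      rw [← Real.rpow_mul (mul_nonneg (hc i hi) (he i hi)), one_div, inv_mul_cancel₀ hp0.ne',
        Real.rpow_one]

lemma sm_tangent {p u v : ℝ} (hp : 1 < p) (hu : 0 < u) (hv : 0 ≤ v) (hvu : v ≤ u) :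
    (u - v) ^ (1 / p) ≤ u ^ (1 / p) * (1 - 1 / p * (v / u)) := by
  have hp0 : 0 < p := by linarith
  have h1 : v / u ≤ 1 := (div_le_one hu).2 hvu
  have h := rpow_one_add_le_one_add_mul_self (s := -(v / u)) (by linarith) (p := 1 / p)
    (by positivity) ((div_le_one hp0).2 hp.le)
  rw [show u - v = u * (1 + -(v / u)) by field_simp; ring, Real.mul_rpow hu.le (by linarith)]
  refine mul_le_mul_of_nonneg_left (h.trans_eq (by ring)) (by positivity)

lemma sm_scalar {p : ℝ} (hp : 1 < p) :
    2 * ((2 : ℝ) ^ p - 1) ^ (-(1 / p)) - 1 ≤ 1 / (p * p ^ (1 / p)) := by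
  have hp0 : 0 < p := by linarith
  have h2 : 1 + p ≤ (2 : ℝ) ^ p := by
    have := one_add_mul_self_le_rpow_one_add (s := 1) (by norm_num) hp.le
    norm_num at this; exact this
  set k := 1 / (p * p ^ (1 / p)) with hk
  have hk0 : 0 < k := by positivity
  have h3 := one_add_mul_self_le_rpow_one_add (s := k) (by linarith) hp.le
  have hpp : p ^ (1 / p) ≤ p := by
    conv_rhs => rw [← Real.rpow_one p]
    exact Real.rpow_le_rpow_of_exponent_le hp.le ((div_le_one hp0).2 hp.le)
  have h4 : 1 / p ≤ p * k := by
    rw [hk, mul_one_div, div_mul_eq_div_div, div_self hp0.ne']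
    exact one_div_le_one_div_of_le (by positivity) hpp
  set T := (2 : ℝ) ^ p with hT
  have hT1 : 0 < T - 1 := by linarith
  -- (1+k)^p (T-1) ≥ T
  have h5 : T ≤ (1 + k) ^ p * (T - 1) := by
    have : 1 / p * (T - 1) ≥ 1 := by
      rw [ge_iff_le, one_div, ← div_eq_inv_mul, le_div_iff₀ hp0]; linarith
    nlinarith
  have h6 := Real.rpow_le_rpow (by positivity : 0 ≤ T) h5 (by positivity : 0 ≤ 1 / p)
  have h7 : ((1 + k) ^ p) ^ (1 / p) = 1 + k := by
    rw [← Real.rpow_mul (by positivity), mul_one_div_cancel hp0.ne', Real.rpow_one]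
  have h8 : T ^ (1 / p) = 2 := by
    rw [hT, ← Real.rpow_mul (by norm_num), mul_one_div_cancel hp0.ne', Real.rpow_one]
  rw [Real.mul_rpow (by positivity) hT1.le, h7, h8] at h6
  rw [Real.rpow_neg hT1.le, ← div_eq_mul_inv, sub_le_iff_le_add, div_le_iff₀ (by positivity)]
  linarith

lemma sm_main {Ω : Type*} [Nonempty Ω] (ℬ : Finset (Set Ω))
    (h_empty : (∅ : Set Ω) ∈ ℬ) (h_univ : (univ : Set Ω) ∈ ℬ)
    (h_compl : ∀ A ∈ ℬ, Aᶜ ∈ ℬ)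
    (h_union : ∀ A ∈ ℬ, ∀ B ∈ ℬ, A ∪ B ∈ ℬ)
    (p : ℝ) (hp : 1 < p) (φ : Set Ω → ℝ) (hφ_empty : φ ∅ = 0)
    (h0 : ∀ A ∈ ℬ, 0 ≤ φ A) (hφ_norm : φ univ = 1)
    (hφ_sub : ∀ A ∈ ℬ, ∀ B ∈ ℬ, Disjoint A B → φ (A ∪ B) ≤ φ A + φ B)
    (hφ_lower : ∀ A ∈ ℬ, ∀ B ∈ ℬ, Disjoint A B → φ A ^ p + φ B ^ p ≤ φ (A ∪ B) ^ p)
    (r : ℝ) (hr : SMCov (ℬ : Set (Set Ω)) φ (fun _ => 1) r) :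
    1 / (p * p ^ (1 / p)) ≤ r := by
  classical
  have hp0 : 0 < p := by linarith
  have hpi : 0 < 1 / p := by positivity
  have h_inter : ∀ A ∈ ℬ, ∀ B ∈ ℬ, A ∩ B ∈ ℬ := by
    intro A hA B hB
    have := h_compl _ (h_union _ (h_compl A hA) _ (h_compl B hB))
    rwa [compl_union, compl_compl, compl_compl] at this
  have h_diff : ∀ A ∈ ℬ, ∀ B ∈ ℬ, A \ B ∈ ℬ := fun A hA B hB => by
    rw [diff_eq]; exact h_inter A hA _ (h_compl B hB)
  obtain ⟨c, hc0, hc1, hc2⟩ := sm_min ℬ h_univ φ h0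
  set K := ∑ A ∈ ℬ, c A * φ A with hK
  have hK0 : 0 ≤ K := Finset.sum_nonneg fun A hA => mul_nonneg (hc0 A) (h0 A hA)
  obtain ⟨lam, hadd, hpos, hle, hlu, hcv⟩ := sm_hb (ℬ : Set (Set Ω)) (by simpa using h_univ) φ
    (by simpa using h0) K hK0 hc2
  refine le_trans ?_ (hc2 r hr)
  set C := ∑ A ∈ ℬ, c A with hC
  have hC0 : 0 < C := by
    have h1 := hc1 (Classical.arbitrary Ω)
    have h2 : ∑ A ∈ ℬ, c A * A.indicator (fun _ => (1 : ℝ)) (Classical.arbitrary Ω) ≤ C := by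
      refine Finset.sum_le_sum fun A _ => ?_
      refine mul_le_of_le_one_right (hc0 A) ?_
      by_cases h : Classical.arbitrary Ω ∈ A <;> simp [h]
    linarith
  have hsplit : ∀ A R : Set Ω, lam (A ∩ R) + lam (A \ R) = lam A := by
    intro A R
    rw [← hadd _ _ (disjoint_sdiff_inter.symm), inter_union_diff]
  have hcomplR : ∀ R : Set Ω, lam R + lam Rᶜ = K := by
    intro R
    rw [← hadd _ _ disjoint_compl_right, union_compl_self, hlu]
  set B := p ^ (1 / p) * K ^ (1 - 1 / p) with hB
  have hB0 : 0 ≤ B := by positivity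
  have hcover : ∀ R : Set Ω, lam R ≤ ∑ A ∈ ℬ, c A * lam (A ∩ R) := fun R =>
    hcv ℬ c R fun x _ => hc1 x
  have hest1 : ∀ R ∈ ℬ, ∑ A ∈ ℬ, c A * φ (A ∩ R) ≤ B * lam R ^ (1 / p) := by
    intro R hR
    have he0 : ∀ A ∈ ℬ, 0 ≤ φ A - lam (A \ R) := by
      intro A hA
      have h1 := hle A (by simpa using hA)
      have h2 := hsplit A R
      have h3 := hpos (A ∩ R)
      linarith
    have hsum : ∑ A ∈ ℬ, c A * (φ A - lam (A \ R)) ≤ lam R := by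
      have h1 := hcover Rᶜ
      have h2 := hcomplR R
      simp only [mul_sub, Finset.sum_sub_distrib]
      simp only [← diff_eq] at h1
      linarith
    have hsum0 : 0 ≤ ∑ A ∈ ℬ, c A * (φ A - lam (A \ R)) :=
      Finset.sum_nonneg fun A hA => mul_nonneg (hc0 A) (he0 A hA)
    calc ∑ A ∈ ℬ, c A * φ (A ∩ R)
        ≤ ∑ A ∈ ℬ, p ^ (1 / p) *
          (c A * (φ A ^ (1 - 1 / p) * (φ A - lam (A \ R)) ^ (1 / p))) := by
          refine Finset.sum_le_sum fun A hA => ?_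
          have hd := h_diff A hA R hR
          have hi := h_inter A hA R hR
          have h1 := sm_pt (p := p) (a := φ A) (e := φ A - lam (A \ R)) (x := φ (A ∩ R))
            (y := φ (A \ R)) hp (h0 _ hi) (he0 A hA) (by have := hpos (A \ R); linarith)
            (by have := hle (A \ R) (by simpa using hd); linarith)
            (by have := hφ_lower _ hd _ hi disjoint_sdiff_inter
                rwa [diff_union_inter] at this)
          have := mul_le_mul_of_nonneg_left h1 (hc0 A)
          linarith
      _ = p ^ (1 / p) * ∑ A ∈ ℬ,
          (c A * (φ A ^ (1 - 1 / p) * (φ A - lam (A \ R)) ^ (1 / p))) := by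
          rw [Finset.mul_sum]
      _ ≤ p ^ (1 / p) * (K ^ (1 - 1 / p) * lam R ^ (1 / p)) := by
          refine mul_le_mul_of_nonneg_left ?_ (by positivity)
          refine (sm_holder ℬ c φ (fun A => φ A - lam (A \ R)) hp (fun A _ => hc0 A) h0 he0).trans ?_
          refine mul_le_mul_of_nonneg_left ?_ (by positivity)
          exact Real.rpow_le_rpow hsum0 hsum hpi.le
      _ = B * lam R ^ (1 / p) := by rw [hB]; ring
  have hest2 : ∀ R ∈ ℬ, ∑ A ∈ ℬ, c A * lam (R \ A) ^ (1 / p) ≤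
      (C - 1 / p) * lam R ^ (1 / p) := by
    intro R hR
    rcases (hpos R).eq_or_lt with hz | hz
    · have : ∀ A, lam (R \ A) = 0 := fun A => by
        have h1 := hsplit R A
        have h2 := hpos (R ∩ A)
        have h3 := hpos (R \ A)
        linarith
      simp only [this, ← hz, Real.zero_rpow hpi.ne', mul_zero, Finset.sum_const_zero, le_refl]
    · have hu : 0 ≤ lam R ^ (1 / p) := by positivity
      calc ∑ A ∈ ℬ, c A * lam (R \ A) ^ (1 / p)
          ≤ ∑ A ∈ ℬ, (lam R ^ (1 / p) * c A -
            lam R ^ (1 / p) * (1 / p) / lam R * (c A * lam (A ∩ R))) := by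
            refine Finset.sum_le_sum fun A _ => ?_
            have h1 := hsplit R A
            rw [inter_comm] at h1
            have h3 := hpos (R \ A)
            have h2 := sm_tangent (p := p) hp hz (hpos (A ∩ R)) (by linarith)
            rw [show lam R - lam (A ∩ R) = lam (R \ A) by linarith] at h2
            refine (mul_le_mul_of_nonneg_left h2 (hc0 A)).trans_eq ?_
            ring
        _ = lam R ^ (1 / p) * C -
            lam R ^ (1 / p) * (1 / p) / lam R * ∑ A ∈ ℬ, (c A * lam (A ∩ R)) := by
            rw [Finset.sum_sub_distrib, ← Finset.mul_sum, ← Finset.mul_sum]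
        _ ≤ lam R ^ (1 / p) * C - lam R ^ (1 / p) * (1 / p) / lam R * lam R := by
            have := mul_le_mul_of_nonneg_left (hcover R)
              (by positivity : 0 ≤ lam R ^ (1 / p) * (1 / p) / lam R)
            linarith
        _ = (C - 1 / p) * lam R ^ (1 / p) := by
            rw [div_mul_cancel₀ _ hz.ne']; ring
  set D := p * B with hD
  have hD0 : 0 ≤ D := by positivity
  have hclaim : ∀ R ∈ ℬ, φ R - D * lam R ^ (1 / p) ≤ 0 := by
    obtain ⟨R₀, hR₀, hmax⟩ := Finset.exists_max_image ℬ (fun R => φ R - D * lam R ^ (1 / p))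
      ⟨_, h_univ⟩
    set M := φ R₀ - D * lam R₀ ^ (1 / p) with hM
    by_contra! hcon
    obtain ⟨R₁, hR₁, hlt⟩ := hcon
    have hMpos : 0 < M := hlt.trans_le (hmax R₁ hR₁)
    obtain ⟨R, hRmin⟩ := (ℬ.filter fun R => φ R - D * lam R ^ (1 / p) = M).exists_minimal
      ⟨R₀, by simp [hR₀, hM]⟩
    obtain ⟨hR, hgR⟩ := Finset.mem_filter.1 hRmin.1
    have hRne : R.Nonempty := by
      rw [nonempty_iff_ne_empty]
      rintro rfl
      have : 0 ≤ D * lam ∅ ^ (1 / p) := mul_nonneg hD0 (Real.rpow_nonneg (hpos _) _)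
      linarith
    obtain ⟨x, hx⟩ := hRne
    obtain ⟨A₀, hA₀, hxA, hcA⟩ : ∃ A ∈ ℬ, x ∈ A ∧ 0 < c A := by
      by_contra! hno
      have h1 := hc1 x
      have h2 : ∑ A ∈ ℬ, c A * A.indicator (fun _ => (1 : ℝ)) x ≤ 0 := by
        refine Finset.sum_nonpos fun A hA => ?_
        by_cases h : x ∈ A
        · simpa [h] using hno A hA h
        · simp [h]
      linarith
    have hstrict : φ (R \ A₀) < M + D * lam (R \ A₀) ^ (1 / p) := by
      have hmem := h_diff R hR A₀ hA₀
      have h1 := hmax _ hmem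
      have h2 : φ (R \ A₀) - D * lam (R \ A₀) ^ (1 / p) ≠ M := by
        intro h
        have := hRmin.2 (Finset.mem_filter.2 ⟨hmem, h⟩) diff_subset
        exact (this hx).2 hxA
      have := lt_of_le_of_ne h1 h2
      linarith
    have hs1 : C * φ R ≤ ∑ A ∈ ℬ, c A * φ (A ∩ R) + ∑ A ∈ ℬ, c A * φ (R \ A) := by
      rw [← Finset.sum_add_distrib, hC, Finset.sum_mul]
      refine Finset.sum_le_sum fun A hA => ?_
      rw [← mul_add]
      refine mul_le_mul_of_nonneg_left ?_ (hc0 A)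
      have := hφ_sub _ (h_inter R hR A hA) _ (h_diff R hR A hA) disjoint_sdiff_inter.symm
      rwa [inter_union_diff, inter_comm] at this
    have hs2 : ∑ A ∈ ℬ, c A * φ (R \ A) <
        ∑ A ∈ ℬ, c A * (M + D * lam (R \ A) ^ (1 / p)) := by
      refine Finset.sum_lt_sum (fun A hA => ?_) ⟨A₀, hA₀, mul_lt_mul_of_pos_left hstrict hcA⟩
      refine mul_le_mul_of_nonneg_left ?_ (hc0 A)
      have := hmax _ (h_diff R hR A hA)
      linarith
    have hs3 : ∑ A ∈ ℬ, c A * (M + D * lam (R \ A) ^ (1 / p)) =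
        C * M + D * ∑ A ∈ ℬ, c A * lam (R \ A) ^ (1 / p) := by
      rw [hC, Finset.sum_mul, Finset.mul_sum, ← Finset.sum_add_distrib]
      exact Finset.sum_congr rfl fun A _ => by ring
    have hs4 := mul_le_mul_of_nonneg_left (hest2 R hR) hD0
    have hs5 := hest1 R hR
    have hs6 : D * ((C - 1 / p) * lam R ^ (1 / p)) =
        C * (D * lam R ^ (1 / p)) - B * lam R ^ (1 / p) := by
      rw [hD]; field_simp
    have hs7 : C * φ R = C * M + C * (D * lam R ^ (1 / p)) := by
      rw [← hgR]; ring
    linarith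
  have hfin := hclaim univ h_univ
  rw [hφ_norm, hlu] at hfin
  have hKK : K ^ (1 - 1 / p) * K ^ (1 / p) = K := by
    rw [← Real.rpow_add' hK0 (by simp)]; simp
  have h1 : D * K ^ (1 / p) = (p * p ^ (1 / p)) * K := by
    rw [hD, hB]
    calc p * (p ^ (1 / p) * K ^ (1 - 1 / p)) * K ^ (1 / p)
        = (p * p ^ (1 / p)) * (K ^ (1 - 1 / p) * K ^ (1 / p)) := by ring
      _ = _ := by rw [hKK]
  rw [div_le_iff₀ (by positivity)]
  linarith

/-- Let `𝒜` be an algebra of subsets of a set `Ω` and `1 < p < ∞`.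
If `φ : 𝒜 → ℝ` is a normalized submeasure satisfying a lower `p`-estimate (i.e. `φ^p`
is a supermeasure), then there is a finitely additive measure `λ` on `𝒜` with
`0 ≤ λ ≤ φ` and `λ(Ω) ≥ K_p = 2 (2^p - 1)^{-1/p} - 1`. -/
theorem submeasure_lower_estimate_dominates_measure
    {Ω : Type*} (𝒜 : Set (Set Ω))
    (h_empty : (∅ : Set Ω) ∈ 𝒜) (h_univ : (univ : Set Ω) ∈ 𝒜)
    (h_compl : ∀ A ∈ 𝒜, Aᶜ ∈ 𝒜)
    (h_union : ∀ A ∈ 𝒜, ∀ B ∈ 𝒜, A ∪ B ∈ 𝒜)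
    (p : ℝ) (hp : 1 < p)
    (φ : Set Ω → ℝ)
    (hφ_empty : φ ∅ = 0)
    (hφ_mono : ∀ A ∈ 𝒜, ∀ B ∈ 𝒜, A ⊆ B → φ A ≤ φ B)
    (hφ_norm : φ univ = 1)
    (hφ_sub : ∀ A ∈ 𝒜, ∀ B ∈ 𝒜, Disjoint A B → φ (A ∪ B) ≤ φ A + φ B)
    (hφ_lower : ∀ A ∈ 𝒜, ∀ B ∈ 𝒜, Disjoint A B → φ A ^ p + φ B ^ p ≤ φ (A ∪ B) ^ p) :
    ∃ lam : Set Ω → ℝ,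
      lam ∅ = 0 ∧
      (∀ A ∈ 𝒜, ∀ B ∈ 𝒜, A ⊆ B → lam A ≤ lam B) ∧
      (∀ A ∈ 𝒜, ∀ B ∈ 𝒜, Disjoint A B → lam (A ∪ B) = lam A + lam B) ∧
      (∀ A ∈ 𝒜, 0 ≤ lam A ∧ lam A ≤ φ A) ∧
      2 * ((2 : ℝ) ^ p - 1) ^ (-(1 / p)) - 1 ≤ lam univ := by
  classical
  have h0 : ∀ A ∈ 𝒜, 0 ≤ φ A := fun A hA => by
    have := hφ_mono ∅ h_empty A hA (empty_subset A)
    rwa [hφ_empty] at this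
  have hne : Nonempty Ω := by
    by_contra h
    rw [not_nonempty_iff] at h
    rw [univ_eq_empty_iff.2 h, hφ_empty] at hφ_norm
    exact zero_ne_one hφ_norm
  have hκ : 0 ≤ 1 / (p * p ^ (1 / p)) := by
    have : 0 < p := by linarith
    positivity
  obtain ⟨lam, hadd, hpos, hle, hlu, -⟩ := sm_hb 𝒜 h_univ φ h0 _ hκ (by
    rintro r ⟨c, c1, c2, c3, c4⟩
    obtain ⟨ℬ, b1, b2, b3, b4, b5, b6⟩ := sm_fin 𝒜 h_empty h_univ h_compl h_union c.support c2
    exact sm_main ℬ b3 b4 b5 b6 p hp φ hφ_empty (fun A hA => h0 A (b1 A hA)) hφ_norm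
      (fun A hA B hB => hφ_sub A (b1 A hA) B (b1 B hB))
      (fun A hA B hB => hφ_lower A (b1 A hA) B (b1 B hB)) r
      ⟨c, c1, fun A hA => by simpa using b2 A hA, c3, c4⟩)
  refine ⟨lam, ?_, fun A _ B _ hAB => ?_, fun A _ B _ => hadd A B, fun A hA => ⟨hpos A, hle A hA⟩, ?_⟩
  · have := hadd ∅ ∅ (disjoint_empty _)
    rw [union_empty] at this
    linarith
  · have h1 := hadd A (B \ A) disjoint_sdiff_right
    rw [union_diff_cancel hAB] at h1
    have := hpos (B \ A)
    linarith
  · rw [hlu]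
    exact sm_scalar hp
end

section
/- Let 𝒜 be an algebra of subsets of a set Ω and let 0 < p < 1. If φ : 𝒜 → ℝ is a normalized supermeasure which satisfies an upper p-estimate, then there exists a finitely additive measure λ on 𝒜 with λ(A) ≥ φ(A) for all A ∈ 𝒜, λ(Ω) ≤ K_p (where K_p = 2(2^p − 1)^{−1/p} − 1), and λ is φ-continuous: for every sequence (F_n) in 𝒜, if φ(F_n) → 0 then λ(F_n) → 0. -/
open Set Filter Topology


lemma aux_concave_diff {p : ℝ} (hp0 : 0 < p) (hp1 : p < 1) {b c t : ℝ} (ht : 0 < t)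
    (htb : t ≤ b) (hbc : b ≤ c) : c ^ p - (c - t) ^ p ≤ b ^ p - (b - t) ^ p := by
  have hc := Real.concaveOn_rpow hp0.le hp1.le
  have hd : 0 < c - b + t := by linarith
  have hm1 : b - t ∈ Ici (0 : ℝ) := by simp; linarith
  have hm2 : c ∈ Ici (0 : ℝ) := by simp; linarith
  have hn1 : 0 ≤ (c - b) / (c - b + t) := div_nonneg (by linarith) hd.le
  have hn2 : 0 ≤ t / (c - b + t) := by positivity
  have hs : (c - b) / (c - b + t) + t / (c - b + t) = 1 := by field_simp
  have h1 := hc.2 hm1 hm2 hn1 hn2 hs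
  have h2 := hc.2 hm1 hm2 hn2 hn1 (by rw [add_comm]; exact hs)
  have e1 : (c - b) / (c - b + t) * (b - t) + t / (c - b + t) * c = b := by field_simp; ring
  have e2 : t / (c - b + t) * (b - t) + (c - b) / (c - b + t) * c = c - t := by field_simp; ring
  simp only [smul_eq_mul] at h1 h2
  rw [e1] at h1
  rw [e2] at h2
  have e3 : (c - b) / (c - b + t) = 1 - t / (c - b + t) := by field_simp; ring
  rw [e3] at h1 h2
  linarith

/-- the profile function. -/
noncomputable def auxG (p r : ℝ) : ℝ := (1 - (1 - r) ^ p) ^ (1 / p) / r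

lemma aux_base_nonneg {p : ℝ} (hp0 : 0 < p) {r : ℝ} (h0 : 0 ≤ r) (h1 : r ≤ 1) :
    0 ≤ 1 - (1 - r) ^ p := by
  have : (1 - r) ^ p ≤ 1 := Real.rpow_le_one (by linarith) (by linarith) hp0.le
  linarith

lemma auxG_nonneg {p : ℝ} (hp0 : 0 < p) {r : ℝ} (h0 : 0 ≤ r) (h1 : r ≤ 1) : 0 ≤ auxG p r :=
  div_nonneg (Real.rpow_nonneg (aux_base_nonneg hp0 h0 h1) _) h0

lemma auxG_rpow {p : ℝ} (hp0 : 0 < p) {r t : ℝ} (h0 : 0 < r) (h1 : r ≤ 1) (ht : 0 ≤ t) :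
    (t * auxG p r) ^ p = (t / r) ^ p - (t / r - t) ^ p := by
  have hb := aux_base_nonneg hp0 h0.le h1
  have e : t * auxG p r = (t / r) * (1 - (1 - r) ^ p) ^ (1 / p) := by
    unfold auxG; field_simp
  have e2 : t / r - t = (t / r) * (1 - r) := by field_simp
  rw [e, e2, Real.mul_rpow (by positivity) (by positivity),
    Real.mul_rpow (by positivity) (by linarith), ← Real.rpow_mul hb]
  rw [one_div, inv_mul_cancel₀ hp0.ne', Real.rpow_one]
  ring

lemma auxG_mono {p : ℝ} (hp0 : 0 < p) (hp1 : p < 1) : MonotoneOn (auxG p) (Icc 0 1) := by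
  intro x hx y hy hxy
  rcases hx.1.eq_or_lt with h | h
  · rw [← h]
    have : auxG p 0 = 0 := by simp [auxG]
    rw [this]
    exact auxG_nonneg hp0 hy.1 hy.2
  have hy0 : 0 < y := by linarith
  have hx' := auxG_rpow hp0 h hx.2 zero_le_one
  have hy' := auxG_rpow hp0 hy0 hy.2 zero_le_one
  rw [one_mul] at hx' hy'
  have := aux_concave_diff hp0 hp1 (t := 1) (b := 1 / y) (c := 1 / x) one_pos
    (by rw [le_div_iff₀ hy0]; linarith [hy.2]) (one_div_le_one_div_of_le h hxy)
  rw [← hx', ← hy'] at this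
  exact (Real.rpow_le_rpow_iff (auxG_nonneg hp0 hx.1 hx.2) (auxG_nonneg hp0 hy.1 hy.2) hp0).1 this

lemma aux_conv {p : ℝ} (hp0 : 0 < p) (hp1 : p < 1) {a b : ℝ} (ha0 : 0 ≤ a) (ha1 : a ≤ 1)
    (hb0 : 0 ≤ b) (hb1 : b ≤ 1) :
    (a + (1 - a) * b) ^ p ≤ a ^ p + (1 - a ^ p) * b ^ p := by
  have hβ0 : 0 ≤ b ^ p := by positivity
  have hβ1 : b ^ p ≤ 1 := Real.rpow_le_one hb0 hb1 hp0.le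
  have hq : 1 ≤ 1 / p := by rw [le_div_iff₀ hp0]; linarith
  have h1a : 0 ≤ 1 - a := by linarith
  have h1β : 0 ≤ 1 - b ^ p := by linarith
  have key := Real.Lp_add_le_of_nonneg (Finset.univ : Finset (Fin 2)) (p := 1 / p)
    (f := ![(1 - b ^ p) * a ^ p, 0]) (g := ![b ^ p * a ^ p, b ^ p * (1 - a) ^ p]) hq
    (by intro i _; fin_cases i <;> simp <;> positivity)
    (by intro i _; fin_cases i <;> simp <;> positivity)
  have hpp : ∀ x : ℝ, 0 ≤ x → (x ^ p) ^ (1 / p) = x := by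
    intro x hx
    rw [← Real.rpow_mul hx, mul_one_div, div_self hp0.ne', Real.rpow_one]
  have hpp2 : ∀ x : ℝ, 0 ≤ x → (x ^ (1 / p)) ^ p = x := by
    intro x hx
    rw [← Real.rpow_mul hx, one_div, inv_mul_cancel₀ hp0.ne', Real.rpow_one]
  have hz : (0 : ℝ) ^ (1 / p) = 0 := Real.zero_rpow (by positivity)
  have e0 : (1 - b ^ p) * a ^ p + b ^ p * a ^ p = a ^ p := by ring
  simp only [Fin.sum_univ_two, Matrix.cons_val_zero, Matrix.cons_val_one, zero_add, one_div_one_div,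
    e0, hz, add_zero] at key
  rw [hpp _ ha0, hpp2 _ (by positivity), Real.mul_rpow hβ0 (by positivity),
    Real.mul_rpow hβ0 (by positivity), hpp _ hb0, hpp _ ha0, hpp _ h1a] at key
  have e1 : b * a + b * (1 - a) = b := by ring
  rw [e1] at key
  calc _ = (a + b * (1 - a)) ^ p := by ring_nf
    _ ≤ _ := key
    _ = _ := by ring

lemma auxG_half {p : ℝ} (hp0 : 0 < p) (hp1 : p < 1) {s : ℝ} (h0 : 0 ≤ s) (h1 : s ≤ 1) :
    auxG p (1 / 2) * auxG p s ≤ auxG p (s / 2) := by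
  have hc := aux_conv hp0 hp1 (a := 1 - s) (b := 1 / 2) (by linarith) (by linarith)
    (by norm_num) (by norm_num)
  have hb1 := aux_base_nonneg hp0 h0 h1
  have hb2 := aux_base_nonneg hp0 (r := 1 / 2) (by norm_num) (by norm_num)
  have hmul : (1 - (1 - 1 / 2 : ℝ) ^ p) * (1 - (1 - s) ^ p) ≤ 1 - (1 - s / 2) ^ p := by
    have e : (1 - s + (1 - (1 - s)) * (1 / 2)) = 1 - s / 2 := by ring
    have e2 : (1 - 1 / 2 : ℝ) = 1 / 2 := by norm_num
    rw [e] at hc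
    rw [e2]
    nlinarith
  have := Real.rpow_le_rpow (mul_nonneg hb2 hb1) hmul (show 0 ≤ 1 / p by positivity)
  rw [Real.mul_rpow hb2 hb1] at this
  unfold auxG
  rw [div_mul_div_comm, show (1 / 2 * s) = s / 2 by ring]
  exact div_le_div_of_nonneg_right this (by linarith)

lemma auxG_int {p : ℝ} (hp0 : 0 < p) (hp1 : p < 1) {a b : ℝ} (ha : 0 ≤ a) (hab : a ≤ b)
    (hb : b ≤ 1) : IntervalIntegrable (auxG p) MeasureTheory.volume a b := by
  apply MonotoneOn.intervalIntegrable
  rw [uIcc_of_le hab]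
  exact (auxG_mono hp0 hp1).mono (Icc_subset_Icc ha hb)

lemma aux_int_upper {p : ℝ} (hp0 : 0 < p) (hp1 : p < 1) {a b : ℝ} (ha : 0 ≤ a) (hab : a ≤ b)
    (hb : b ≤ 1) : ∫ x in a..b, auxG p x ≤ (b - a) * auxG p b := by
  have := intervalIntegral.integral_mono_on hab (auxG_int hp0 hp1 ha hab hb)
    (intervalIntegrable_const (c := auxG p b))
    (fun x hx => auxG_mono hp0 hp1 ⟨ha.trans hx.1, hx.2.trans hb⟩ ⟨ha.trans hab, hb⟩ hx.2)
  simpa using this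

lemma aux_int_lower {p : ℝ} (hp0 : 0 < p) (hp1 : p < 1) {a b : ℝ} (ha : 0 ≤ a) (hab : a ≤ b)
    (hb : b ≤ 1) : (b - a) * auxG p a ≤ ∫ x in a..b, auxG p x := by
  have := intervalIntegral.integral_mono_on hab 
    (intervalIntegrable_const (c := auxG p a)) (auxG_int hp0 hp1 ha hab hb)
    (fun x hx => auxG_mono hp0 hp1 ⟨ha, hab.trans hb⟩ ⟨ha.trans hx.1, hx.2.trans hb⟩ hx.1)
  simpa using this

lemma auxG_at_half {p : ℝ} (hp0 : 0 < p) : auxG p (1 / 2) = ((2 : ℝ) ^ p - 1) ^ (1 / p) := by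
  have h2 : (1 : ℝ) ≤ 2 ^ p := Real.one_le_rpow (by norm_num) hp0.le
  have hG := auxG_nonneg hp0 (r := 1 / 2) (by norm_num) (by norm_num)
  have h := auxG_rpow hp0 (r := 1 / 2) (t := 1) (by norm_num) (by norm_num) zero_le_one
  norm_num at h
  rw [← h, ← Real.rpow_mul hG, mul_one_div, div_self hp0.ne', Real.rpow_one]

lemma aux_J {p : ℝ} (hp0 : 0 < p) (hp1 : p < 1) {K : ℝ} (hK0 : 0 ≤ K)
    (hK : K * ∫ x in (0 : ℝ)..1, auxG p x ≤ 1) :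
    K ≤ 2 * ((2 : ℝ) ^ p - 1) ^ (-(1 / p)) - 1 := by
  have h2 : (1 : ℝ) < 2 ^ p := Real.one_lt_rpow (by norm_num) hp0
  have h2' : (2 : ℝ) ^ p < 2 := by
    simpa using Real.rpow_lt_rpow_of_exponent_lt (x := 2) (by norm_num) hp1
  have hg := auxG_at_half hp0
  set g := auxG p (1 / 2) with hgdef
  have hgpos : 0 < g := by rw [hg]; apply Real.rpow_pos_of_pos; linarith
  have hg1 : g ≤ 1 := by rw [hg]; apply Real.rpow_le_one (by linarith) (by linarith) (by positivity)
  set J := ∫ x in (0 : ℝ)..1, auxG p x with hJ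
  have hsplit : (∫ x in (0 : ℝ)..(1/2), auxG p x) + ∫ x in (1/2 : ℝ)..1, auxG p x = J :=
    intervalIntegral.integral_add_adjacent_intervals
      (auxG_int hp0 hp1 le_rfl (by norm_num) (by norm_num))
      (auxG_int hp0 hp1 (by norm_num) (by norm_num) le_rfl)
  have hA : (1 / 2) * g ≤ ∫ x in (1/2 : ℝ)..1, auxG p x := by
    have := aux_int_lower hp0 hp1 (a := 1/2) (b := 1) (by norm_num) (by norm_num) le_rfl
    norm_num at this ⊢
    rw [hgdef]; norm_num; exact this
  have hB : (1 / 2) * (g * J) ≤ ∫ x in (0 : ℝ)..(1/2), auxG p x := by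
    have e : ∫ x in (0 : ℝ)..1, auxG p (x / 2) = 2 * ∫ x in (0 : ℝ)..(1/2), auxG p x := by
      rw [intervalIntegral.integral_comp_div _ (by norm_num : (2 : ℝ) ≠ 0)]
      simp
    have : g * J ≤ ∫ x in (0 : ℝ)..1, auxG p (x / 2) := by
      rw [hJ, ← intervalIntegral.integral_const_mul]
      apply intervalIntegral.integral_mono_on zero_le_one
      · exact (auxG_int hp0 hp1 le_rfl zero_le_one le_rfl).const_mul _
      · apply MonotoneOn.intervalIntegrable
        rw [uIcc_of_le zero_le_one]
        intro x hx y hy hxy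
        apply auxG_mono hp0 hp1 ⟨by linarith [hx.1], by linarith [hx.2]⟩
          ⟨by linarith [hy.1], by linarith [hy.2]⟩
        linarith
      · intro x hx
        exact auxG_half hp0 hp1 hx.1 hx.2
    linarith
  have hfin : g ≤ (2 - g) * J := by nlinarith
  have hinv : ((2 : ℝ) ^ p - 1) ^ (-(1 / p)) = g⁻¹ := by
    rw [hg, Real.rpow_neg (by linarith)]
  rw [hinv]
  have : K * g ≤ 2 - g := by nlinarith
  have h3 : K ≤ (2 - g) / g := by rw [le_div_iff₀ hgpos]; exact this
  calc K ≤ (2 - g) / g := h3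
    _ = _ := by field_simp

lemma aux_exists_min {ι : Type*} [Fintype ι] [DecidableEq ι] (φ : Finset ι → ℝ)
    (h0 : φ ∅ = 0) (hmono : ∀ A B, A ⊆ B → φ A ≤ φ B) (h1 : φ Finset.univ = 1) :
    ∃ w : ι → ℝ, (∀ i, 0 ≤ w i) ∧ (∀ A, φ A ≤ ∑ i ∈ A, w i) ∧
      ∀ v : ι → ℝ, (∀ i, 0 ≤ v i) → (∀ A, φ A ≤ ∑ i ∈ A, v i) → ∑ i, w i ≤ ∑ i, v i := by
  classical
  let N : ℝ := Fintype.card ι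
  let X : Set (ι → ℝ) := {w | (∀ i, 0 ≤ w i) ∧ (∀ A, φ A ≤ ∑ i ∈ A, w i) ∧ ∑ i, w i ≤ N}
  have hXc : IsClosed X := by
    have : X = (⋂ i, {w | 0 ≤ w i}) ∩ ((⋂ A, {w | φ A ≤ ∑ i ∈ A, w i}) ∩ {w | ∑ i, w i ≤ N}) := by
      ext w; simp [X]
    rw [this]
    refine (isClosed_iInter fun i => isClosed_le (by fun_prop) (by fun_prop)).inter
      ((isClosed_iInter fun A => isClosed_le (by fun_prop) (by fun_prop)).inter
        (isClosed_le (by fun_prop) (by fun_prop)))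
  have hXb : X ⊆ Set.pi univ (fun _ => Icc 0 N) := by
    rintro w ⟨hw, -, hN⟩ i -
    exact ⟨hw i, (Finset.single_le_sum (fun j _ => hw j) (Finset.mem_univ i)).trans hN⟩
  have hcomp : IsCompact X := (isCompact_univ_pi fun _ => isCompact_Icc).of_isClosed_subset hXc hXb
  have hone : (fun _ => 1 : ι → ℝ) ∈ X := by
    refine ⟨fun _ => zero_le_one, fun A => ?_, by simp [N]⟩
    rcases A.eq_empty_or_nonempty with rfl | hA
    · simp [h0]
    · have := hmono A _ (Finset.subset_univ A)
      have h' : (1 : ℝ) ≤ A.card := by exact_mod_cast hA.card_pos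
      simp; linarith
  obtain ⟨w, hw, hmin⟩ := hcomp.exists_isMinOn ⟨_, hone⟩
    (f := fun w : ι → ℝ => ∑ i, w i) (by fun_prop)
  refine ⟨w, hw.1, hw.2.1, fun v hv hvA => ?_⟩
  by_cases h : ∑ i, v i ≤ N
  · exact hmin (show v ∈ X from ⟨hv, hvA, h⟩)
  · exact hw.2.2.trans (not_le.1 h).le

lemma aux_tight {ι : Type*} [Fintype ι] [DecidableEq ι] (φ : Finset ι → ℝ) (w : ι → ℝ)
    (hw : ∀ i, 0 ≤ w i) (hdom : ∀ A, φ A ≤ ∑ i ∈ A, w i)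
    (hmin : ∀ v : ι → ℝ, (∀ i, 0 ≤ v i) → (∀ A, φ A ≤ ∑ i ∈ A, v i) → ∑ i, w i ≤ ∑ i, v i)
    (r : ℝ) (P : Finset ι) (hr : 0 < r) (hP : ∑ i ∈ Pᶜ, w i = r * ∑ i, w i)
    (hK : 0 < ∑ i, w i) :
    ∃ B, φ B = ∑ i ∈ B, w i ∧ 0 < ∑ i ∈ B, w i ∧ r * ∑ i ∈ B, w i ≤ ∑ i ∈ B \ P, w i := by
  by_contra! hcon
  let v : ℝ → ι → ℝ := fun δ i => w i * (1 + δ * r - δ ^ 2) - δ * (if i ∈ P then 0 else w i)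
  have hsum : ∀ δ A, ∑ i ∈ A, v δ i
      = (∑ i ∈ A, w i) * (1 + δ * r - δ ^ 2) - δ * ∑ i ∈ A \ P, w i := by
    intro δ A
    simp only [v, Finset.sum_sub_distrib, ← Finset.sum_mul, ← Finset.mul_sum]
    congr 2
    rw [← Finset.filter_notMem_eq_sdiff, Finset.sum_filter]
    apply Finset.sum_congr rfl
    intro i _
    by_cases h : i ∈ P <;> simp [h]
  have hlim : ∀ A, Tendsto (fun δ => ∑ i ∈ A, v δ i) (𝓝[>] 0) (𝓝 (∑ i ∈ A, w i)) := by
    intro A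
    simp only [hsum]
    apply tendsto_nhdsWithin_of_tendsto_nhds
    have : Continuous fun δ : ℝ =>
      (∑ i ∈ A, w i) * (1 + δ * r - δ ^ 2) - δ * ∑ i ∈ A \ P, w i := by fun_prop
    simpa using this.tendsto 0
  have hpos : ∀ᶠ δ : ℝ in 𝓝[>] 0, 0 < δ := eventually_mem_nhdsWithin
  have hsmall : ∀ c : ℝ, 0 < c → ∀ᶠ δ : ℝ in 𝓝[>] 0, δ < c := by
    intro c hc
    exact nhdsWithin_le_nhds (gt_mem_nhds hc)
  have hnn : ∀ᶠ δ : ℝ in 𝓝[>] 0, ∀ i, 0 ≤ v δ i := by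
    filter_upwards [hpos, hsmall r hr, hsmall 1 one_pos] with δ h1 h2 h3 i
    simp only [v]
    have hwi := hw i
    by_cases h : i ∈ P
    · simp only [h, if_true]
      nlinarith [mul_nonneg hwi (show 0 ≤ δ * (r - δ) by nlinarith)]
    · simp only [h, if_false]
      nlinarith [mul_nonneg hwi (show 0 ≤ δ * (r - δ) by nlinarith),
        mul_nonneg hwi (show 0 ≤ 1 - δ by linarith)]
  have hev : ∀ᶠ δ : ℝ in 𝓝[>] 0, ∀ A, φ A ≤ ∑ i ∈ A, v δ i := by
    rw [eventually_all]
    intro A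
    rcases (hdom A).lt_or_eq with hlt | heq
    · exact ((hlim A).eventually (lt_mem_nhds hlt)).mono fun _ h => h.le
    · rcases (Finset.sum_nonneg fun i (_ : i ∈ A) => hw i).eq_or_lt with hz | hp
      · filter_upwards [hnn] with δ h
        rw [heq, ← hz]
        exact Finset.sum_nonneg fun i _ => h i
      · have hc := hcon A heq hp
        filter_upwards [hpos, hsmall ((r * ∑ i ∈ A, w i - ∑ i ∈ A \ P, w i) / ∑ i ∈ A, w i)
          (div_pos (by linarith) hp)] with δ h1 h2
        rw [lt_div_iff₀ hp] at h2
        rw [hsum, heq]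
        nlinarith
  obtain ⟨δ, h1, h2, h3⟩ := (hpos.and (hnn.and hev)).exists
  have h4 := hmin (v δ) h2 h3
  rw [hsum, ← Finset.compl_eq_univ_sdiff, hP] at h4
  nlinarith [mul_pos hK (pow_pos h1 2)]

lemma aux_finite {ι : Type*} [Fintype ι] [DecidableEq ι] {p : ℝ} (hp0 : 0 < p) (hp1 : p < 1)
    (φ : Finset ι → ℝ)
    (h0 : φ ∅ = 0) (hmono : ∀ A B, A ⊆ B → φ A ≤ φ B) (h1 : φ Finset.univ = 1)
    (hsuper : ∀ A B, Disjoint A B → φ A + φ B ≤ φ (A ∪ B))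
    (hupper : ∀ A B, Disjoint A B → φ (A ∪ B) ^ p ≤ φ A ^ p + φ B ^ p) :
    ∃ w : ι → ℝ, (∀ i, 0 ≤ w i) ∧ (∀ A, φ A ≤ ∑ i ∈ A, w i) ∧
      ∑ i, w i ≤ 2 * ((2 : ℝ) ^ p - 1) ^ (-(1 / p)) - 1 := by
  obtain ⟨w, hw, hdom, hmin⟩ := aux_exists_min φ h0 hmono h1
  refine ⟨w, hw, hdom, ?_⟩
  set K := ∑ i, w i with hKdef
  have hK : 0 < K := by have := hdom Finset.univ; linarith
  apply aux_J hp0 hp1 hK.le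
  have hnn : ∀ A, 0 ≤ φ A := fun A => h0 ▸ hmono ∅ A (Finset.empty_subset A)
  have hsn : ∀ A : Finset ι, 0 ≤ ∑ i ∈ A, w i := fun A => Finset.sum_nonneg fun i _ => hw i
  have hcompl : ∀ A : Finset ι, ∑ i ∈ Aᶜ, w i = K - ∑ i ∈ A, w i := by
    intro A
    rw [hKdef, ← Finset.sum_add_sum_compl A]; ring
  have hle : ∀ A : Finset ι, ∑ i ∈ A, w i ≤ K := fun A => by
    have := hsn Aᶜ; rw [hcompl] at this; linarith
  let R : Finset ι → ℝ := fun P => (K - ∑ i ∈ P, w i) / K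
  have hR0 : ∀ P, 0 ≤ R P := fun P => div_nonneg (by linarith [hle P]) hK.le
  have hR1 : ∀ P, R P ≤ 1 := fun P => by
    simp only [R]; rw [div_le_one hK]; linarith [hsn P]
  let good : Finset ι → Prop := fun P => K * ∫ x in (R P)..1, auxG p x ≤ φ P
  have hg0 : good ∅ := by simp [good, R, hK.ne', h0]
  classical
  obtain ⟨P, hPmem, hPmax⟩ := (Finset.univ.filter good).exists_max_image
    (fun P => ∑ i ∈ P, w i) ⟨∅, by simpa using hg0⟩
  have hP : good P := by simpa using hPmem
  rcases (hR0 P).eq_or_lt with hz | hpos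
  · simp only [good] at hP
    rw [← hz] at hP
    exact hP.trans (h1 ▸ hmono P _ (Finset.subset_univ P))
  exfalso
  obtain ⟨B, hB1, hB2, hB3⟩ := aux_tight φ w hw hdom hmin (R P) P hpos
    (by rw [hcompl, ← hKdef]; simp only [R]; field_simp) hK
  set t := ∑ i ∈ B \ P, w i with ht
  set b := ∑ i ∈ B, w i with hb
  have htpos : 0 < t := lt_of_lt_of_le (mul_pos hpos hB2) hB3
  have hinter : ∑ i ∈ B ∩ P, w i = b - t := by
    have h7 : B ∩ P ∪ B \ P = B := by ext x; simp; tauto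
    have h8 : Disjoint (B ∩ P) (B \ P) := by
      rw [Finset.disjoint_left]; intro x hx hx'; simp at hx hx'; exact hx'.2 hx.2
    have h9 := Finset.sum_union (f := w) h8
    rw [h7] at h9
    linarith
  have htb : t ≤ b := by have := hsn (B ∩ P); rw [hinter] at this; linarith
  have hE : t * auxG p (R P) ≤ φ (B \ P) := by
    have hu := hupper (B ∩ P) (B \ P) (by
      rw [Finset.disjoint_left]; intro x hx hx'; simp at hx hx'; exact hx'.2 hx.2)
    have hun : B ∩ P ∪ B \ P = B := by ext x; simp; tauto
    rw [hun, hB1] at hu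
    have h2 : φ (B ∩ P) ^ p ≤ (b - t) ^ p :=
      Real.rpow_le_rpow (hnn _) (hinter ▸ hdom _) hp0.le
    have h3 := aux_concave_diff hp0 hp1 htpos htb (c := t / R P)
      (by rw [le_div_iff₀ hpos]; linarith)
    rw [← auxG_rpow hp0 hpos (hR1 P) htpos.le] at h3
    exact (Real.rpow_le_rpow_iff (mul_nonneg htpos.le (auxG_nonneg hp0 hpos.le (hR1 P)))
      (hnn _) hp0).1 (by linarith)
  have hun2 : ∑ i ∈ P ∪ B \ P, w i = ∑ i ∈ P, w i + t := by
    rw [Finset.sum_union Finset.disjoint_sdiff]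
  have hgood : good (P ∪ B \ P) := by
    have hs := hsuper P (B \ P) Finset.disjoint_sdiff
    have hRR : R (P ∪ B \ P) = R P - t / K := by
      simp only [R, hun2]; ring
    have hle' : R (P ∪ B \ P) ≤ R P := by rw [hRR]; have : 0 < t / K := by positivity
                                          linarith
    have hi := aux_int_upper hp0 hp1 (hR0 (P ∪ B \ P)) hle' (hR1 P)
    have hadd := intervalIntegral.integral_add_adjacent_intervals
      (auxG_int hp0 hp1 (hR0 (P ∪ B \ P)) hle' (hR1 P))
      (auxG_int hp0 hp1 (hR0 P) (hR1 P) le_rfl)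
    simp only [good] at hP ⊢
    rw [← hadd, mul_add]
    have : R P - R (P ∪ B \ P) = t / K := by rw [hRR]; ring
    rw [this] at hi
    have h5 := mul_le_mul_of_nonneg_left hi hK.le
    have h6 : K * (t / K * auxG p (R P)) = t * auxG p (R P) := by field_simp
    linarith
  have := hPmax (P ∪ B \ P) (Finset.mem_filter.2 ⟨Finset.mem_univ _, hgood⟩)
  rw [hun2] at this
  linarith

lemma aux_reduce {Ω : Type*} (𝒜 : Set (Set Ω))
    (h_empty : (∅ : Set Ω) ∈ 𝒜) (h_univ : (univ : Set Ω) ∈ 𝒜)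
    (h_compl : ∀ A ∈ 𝒜, Aᶜ ∈ 𝒜)
    (h_union : ∀ A ∈ 𝒜, ∀ B ∈ 𝒜, A ∪ B ∈ 𝒜)
    (p : ℝ) (hp0 : 0 < p) (hp1 : p < 1)
    (φ : Set Ω → ℝ)
    (hφ_empty : φ ∅ = 0)
    (hφ_mono : ∀ A ∈ 𝒜, ∀ B ∈ 𝒜, A ⊆ B → φ A ≤ φ B)
    (hφ_norm : φ univ = 1)
    (hφ_super : ∀ A ∈ 𝒜, ∀ B ∈ 𝒜, Disjoint A B → φ A + φ B ≤ φ (A ∪ B))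
    (hφ_upper : ∀ A ∈ 𝒜, ∀ B ∈ 𝒜, Disjoint A B → φ (A ∪ B) ^ p ≤ φ A ^ p + φ B ^ p)
    (S : Finset 𝒜) :
    ∃ μ : Set Ω → ℝ, (∀ A, μ A ∈ Icc 0 (2 * ((2 : ℝ) ^ p - 1) ^ (-(1 / p)) - 1)) ∧
      (∀ A B, A ⊆ B → μ A ≤ μ B) ∧
      (∀ A ∈ S, ∀ B, Disjoint (A : Set Ω) B → μ (A ∪ B) = μ A + μ B) ∧
      (∀ A ∈ S, φ A ≤ μ A) := by
  classical
  have h_inter : ∀ A ∈ 𝒜, ∀ B ∈ 𝒜, A ∩ B ∈ 𝒜 := by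
    intro A hA B hB
    have := h_compl _ (h_union _ (h_compl A hA) _ (h_compl B hB))
    rwa [compl_union, compl_compl, compl_compl] at this
  let f : Ω → (S → Prop) := fun x a => x ∈ (a : 𝒜).1
  have hsing : ∀ i : S → Prop, {x | f x = i} ∈ 𝒜 := by
    intro i
    have e : {x | f x = i} = ⋂ a ∈ (Finset.univ : Finset S), {x | f x a = i a} := by
      ext x; simp [funext_iff]
    rw [e]
    have : ∀ T : Finset S, (⋂ a ∈ T, {x | f x a = i a}) ∈ 𝒜 := by
      intro T
      induction T using Finset.induction_on with
      | empty => simpa using h_univ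
      | insert a T _ ih =>
        rw [Finset.set_biInter_insert]
        refine h_inter _ ?_ _ ih
        by_cases h : i a
        · have : {x | f x a = i a} = (a : 𝒜).1 := by ext x; simp [h, f]
          rw [this]; exact (a : 𝒜).2
        · have : {x | f x a = i a} = ((a : 𝒜).1)ᶜ := by ext x; simp [h, f]
          rw [this]; exact h_compl _ (a : 𝒜).2
    exact this _
  have hpre : ∀ T : Finset (S → Prop), {x | f x ∈ T} ∈ 𝒜 := by
    intro T
    induction T using Finset.induction_on with
    | empty => simpa using h_empty
    | insert i T _ ih =>
      have : {x | f x ∈ insert i T} = {x | f x = i} ∪ {x | f x ∈ T} := by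
        ext x; simp
      rw [this]
      exact h_union _ (hsing i) _ ih
  have hun : ∀ A B : Finset (S → Prop), {x | f x ∈ A ∪ B} = {x | f x ∈ A} ∪ {x | f x ∈ B} := by
    intro A B; ext x; simp
  have hdj : ∀ A B : Finset (S → Prop), Disjoint A B →
      Disjoint {x | f x ∈ A} {x | f x ∈ B} := by
    intro A B h
    rw [Set.disjoint_left]
    intro x hx hx'
    exact Finset.disjoint_left.1 h hx hx'
  obtain ⟨w, hw, hdom, htot⟩ := aux_finite hp0 hp1 (fun T : Finset (S → Prop) => φ {x | f x ∈ T})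
    (by simpa using hφ_empty)
    (fun A B h => hφ_mono _ (hpre A) _ (hpre B) fun x hx => h hx)
    (by simpa using hφ_norm)
    (fun A B h => by
      rw [hun]; exact hφ_super _ (hpre A) _ (hpre B) (hdj A B h))
    (fun A B h => by
      rw [hun]; exact hφ_upper _ (hpre A) _ (hpre B) (hdj A B h))
  let I : Set Ω → Finset (S → Prop) := fun A => Finset.univ.filter (fun i => i ∈ f '' A)
  have hImono : ∀ A B, A ⊆ B → I A ⊆ I B := by
    intro A B h i hi
    simp only [I, Finset.mem_filter, Finset.mem_univ, true_and] at hi ⊢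
    exact image_mono h hi
  have hmemI : ∀ A ∈ S, ∀ x, f x ∈ I A ↔ x ∈ (A : Set Ω) := by
    intro A hA x
    simp only [I, Finset.mem_filter, Finset.mem_univ, true_and]
    constructor
    · rintro ⟨y, hy, hxy⟩
      have := congrFun hxy ⟨A, hA⟩
      simp only [f, eq_iff_iff] at this
      exact this.1 hy
    · intro hx; exact ⟨x, hx, rfl⟩
  refine ⟨fun A => ∑ i ∈ I A, w i, fun A => ⟨Finset.sum_nonneg fun i _ => hw i, ?_⟩, ?_, ?_, ?_⟩
  · exact (Finset.sum_le_univ_sum_of_nonneg hw).trans htot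
  · intro A B h
    exact Finset.sum_le_sum_of_subset_of_nonneg (hImono A B h) fun i _ _ => hw i
  · intro A hA B hAB
    have e : I (A ∪ B) = I A ∪ I B := by
      ext i; simp only [I, Finset.mem_filter, Finset.mem_union, Finset.mem_univ, true_and,
        image_union, mem_union]
    have d : Disjoint (I A) (I B) := by
      rw [Finset.disjoint_left]
      intro i hi hi'
      simp only [I, Finset.mem_filter, Finset.mem_univ, true_and] at hi'
      obtain ⟨y, hy, rfl⟩ := hi'
      exact Set.disjoint_left.1 hAB ((hmemI A hA y).1 hi) hy
    simp only [e, Finset.sum_union d]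
  · intro A hA
    have := hdom (I A)
    have e : {x | f x ∈ I A} = (A : Set Ω) := by ext x; exact hmemI A hA x
    rwa [e] at this

/-- Let `𝒜` be an algebra of subsets of a set `Ω` and `0 < p < 1`.
If `φ : 𝒜 → ℝ` is a normalized supermeasure satisfying an upper `p`-estimate (i.e. `φ^p`
is a submeasure), then there is a finitely additive measure `λ` on `𝒜` with `λ ≥ φ`,
`λ(Ω) ≤ K_p = 2 (2^p - 1)^{-1/p} - 1`, and `λ` is `φ`-continuous. -/
theorem supermeasure_upper_estimate_dominated_by_measure
    {Ω : Type*} (𝒜 : Set (Set Ω))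
    (h_empty : (∅ : Set Ω) ∈ 𝒜) (h_univ : (univ : Set Ω) ∈ 𝒜)
    (h_compl : ∀ A ∈ 𝒜, Aᶜ ∈ 𝒜)
    (h_union : ∀ A ∈ 𝒜, ∀ B ∈ 𝒜, A ∪ B ∈ 𝒜)
    (p : ℝ) (hp0 : 0 < p) (hp1 : p < 1)
    (φ : Set Ω → ℝ)
    (hφ_empty : φ ∅ = 0)
    (hφ_mono : ∀ A ∈ 𝒜, ∀ B ∈ 𝒜, A ⊆ B → φ A ≤ φ B)
    (hφ_norm : φ univ = 1)
    (hφ_super : ∀ A ∈ 𝒜, ∀ B ∈ 𝒜, Disjoint A B → φ A + φ B ≤ φ (A ∪ B))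
    (hφ_upper : ∀ A ∈ 𝒜, ∀ B ∈ 𝒜, Disjoint A B → φ (A ∪ B) ^ p ≤ φ A ^ p + φ B ^ p) :
    ∃ lam : Set Ω → ℝ,
      lam ∅ = 0 ∧
      (∀ A ∈ 𝒜, ∀ B ∈ 𝒜, A ⊆ B → lam A ≤ lam B) ∧
      (∀ A ∈ 𝒜, ∀ B ∈ 𝒜, Disjoint A B → lam (A ∪ B) = lam A + lam B) ∧
      (∀ A ∈ 𝒜, φ A ≤ lam A) ∧
      lam univ ≤ 2 * ((2 : ℝ) ^ p - 1) ^ (-(1 / p)) - 1 ∧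
      (∀ F : ℕ → Set Ω, (∀ n, F n ∈ 𝒜) →
        Tendsto (fun n => φ (F n)) atTop (𝓝 0) →
        Tendsto (fun n => lam (F n)) atTop (𝓝 0)) := by
  classical
  set Kp := 2 * ((2 : ℝ) ^ p - 1) ^ (-(1 / p)) - 1 with hKp
  have h_diff : ∀ A ∈ 𝒜, ∀ B ∈ 𝒜, A \ B ∈ 𝒜 := by
    intro A hA B hB
    have := h_compl _ (h_union _ (h_compl A hA) _ hB)
    rwa [compl_union, compl_compl, ← diff_eq] at this
  have h_inter : ∀ A ∈ 𝒜, ∀ B ∈ 𝒜, A ∩ B ∈ 𝒜 := by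
    intro A hA B hB
    have := h_compl _ (h_union _ (h_compl A hA) _ (h_compl B hB))
    rwa [compl_union, compl_compl, compl_compl] at this
  have hφ_nn : ∀ A ∈ 𝒜, 0 ≤ φ A := fun A hA =>
    hφ_empty ▸ hφ_mono ∅ h_empty A hA (empty_subset A)
  -- the compact set of dominating measures
  let X : Set (Set Ω → ℝ) := {μ | (∀ A, μ A ∈ Icc 0 Kp) ∧
    (∀ A ∈ 𝒜, ∀ B ∈ 𝒜, A ⊆ B → μ A ≤ μ B) ∧
    (∀ A ∈ 𝒜, ∀ B ∈ 𝒜, Disjoint A B → μ (A ∪ B) = μ A + μ B) ∧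
    (∀ A ∈ 𝒜, φ A ≤ μ A)}
  have hXc : IsClosed X := by
    have : X = (⋂ A, {μ : Set Ω → ℝ | μ A ∈ Icc 0 Kp}) ∩
        ((⋂ A ∈ 𝒜, ⋂ B ∈ 𝒜, ⋂ _ : A ⊆ B, {μ : Set Ω → ℝ | μ A ≤ μ B}) ∩
        ((⋂ A ∈ 𝒜, ⋂ B ∈ 𝒜, ⋂ _ : Disjoint A B, {μ : Set Ω → ℝ | μ (A ∪ B) = μ A + μ B}) ∩
        (⋂ A ∈ 𝒜, {μ : Set Ω → ℝ | φ A ≤ μ A}))) := by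
      ext μ; simp only [X, mem_inter_iff, mem_iInter, mem_setOf_eq]
    rw [this]
    refine IsClosed.inter (isClosed_iInter fun A => ?_) (IsClosed.inter
      (isClosed_iInter fun A => isClosed_iInter fun _ => isClosed_iInter fun B =>
        isClosed_iInter fun _ => isClosed_iInter fun _ => ?_) (IsClosed.inter
      (isClosed_iInter fun A => isClosed_iInter fun _ => isClosed_iInter fun B =>
        isClosed_iInter fun _ => isClosed_iInter fun _ => ?_)
      (isClosed_iInter fun A => isClosed_iInter fun _ => ?_)))
    · exact isClosed_Icc.preimage (continuous_apply A)
    · exact isClosed_le (continuous_apply A) (continuous_apply B)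
    · exact isClosed_eq (continuous_apply _) ((continuous_apply A).add (continuous_apply B))
    · exact isClosed_le continuous_const (continuous_apply A)
  have hbox : IsCompact (Set.pi univ (fun _ : Set Ω => Icc 0 Kp)) :=
    isCompact_univ_pi fun _ => isCompact_Icc
  have hXcomp : IsCompact X := hbox.of_isClosed_subset hXc fun μ hμ A _ => hμ.1 A
  have hXne : X.Nonempty := by
    choose μ hμ1 hμ2 hμ3 hμ4 using aux_reduce 𝒜 h_empty h_univ h_compl h_union p hp0 hp1 φ
      hφ_empty hφ_mono hφ_norm hφ_super hφ_upper
    let U : Ultrafilter (Finset 𝒜) := Ultrafilter.of atTop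
    have hU : (U : Filter (Finset 𝒜)) ≤ atTop := Ultrafilter.of_le atTop
    have hlim : ∀ A, ∃ l ∈ Icc 0 Kp, Tendsto (fun S => μ S A) U (𝓝 l) := by
      intro A
      exact isCompact_Icc.ultrafilter_le_nhds (U.map fun S => μ S A)
        (le_principal_iff.2 (Filter.mem_map.2 (Filter.univ_mem' fun S => hμ1 S A)))
    choose l hl1 hl2 using hlim
    have hmem : ∀ A (hA : A ∈ 𝒜), ∀ᶠ S in (U : Filter (Finset 𝒜)), (⟨A, hA⟩ : 𝒜) ∈ S := by
      intro A hA
      refine hU ?_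
      filter_upwards [eventually_ge_atTop ({⟨A, hA⟩} : Finset 𝒜)] with S hS
      exact hS (Finset.mem_singleton_self _)
    refine ⟨l, hl1, fun A _ B _ h => ?_, fun A hA B hB h => ?_, fun A hA => ?_⟩
    · exact le_of_tendsto_of_tendsto' (hl2 A) (hl2 B) fun S => hμ2 S A B h
    · refine tendsto_nhds_unique (hl2 (A ∪ B)) (((hl2 A).add (hl2 B)).congr' ?_)
      filter_upwards [hmem A hA] with S hS
      exact (hμ3 S _ hS B h).symm
    · refine ge_of_tendsto (hl2 A) ?_
      filter_upwards [hmem A hA] with S hS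
      exact hμ4 S _ hS
  obtain ⟨lam, hlam, hmin⟩ := hXcomp.exists_isMinOn hXne
    (f := fun μ : Set Ω → ℝ => μ univ) (continuous_apply _).continuousOn
  obtain ⟨hl1, hl2, hl3, hl4⟩ := hlam
  have hl0 : lam ∅ = 0 := by
    have := hl3 ∅ h_empty ∅ h_empty (by simp)
    simp at this
    exact this
  refine ⟨lam, hl0, hl2, hl3, hl4, (hl1 univ).2, fun F hF hφF => ?_⟩
  by_contra hnot
  have hfreq : ∃ ε > 0, ∃ᶠ n in atTop, ε ≤ lam (F n) := by
    by_contra! hcon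
    apply hnot
    rw [Metric.tendsto_nhds]
    intro ε hε
    have h := hcon ε hε
    filter_upwards [h] with n hn
    rw [Real.dist_eq, sub_zero, abs_of_nonneg (hl1 _).1]
    exact hn
  obtain ⟨ε, hε, hfr⟩ := hfreq
  have hne : (atTop ⊓ 𝓟 {n | ε ≤ lam (F n)}).NeBot := frequently_mem_iff_neBot.1 hfr
  let U : Ultrafilter ℕ := Ultrafilter.of (atTop ⊓ 𝓟 {n | ε ≤ lam (F n)})
  have hU : (U : Filter ℕ) ≤ atTop ⊓ 𝓟 {n | ε ≤ lam (F n)} := Ultrafilter.of_le _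
  have hU1 : (U : Filter ℕ) ≤ atTop := hU.trans inf_le_left
  have hU2 : ∀ᶠ n in (U : Filter ℕ), ε ≤ lam (F n) := hU.trans inf_le_right (mem_principal_self _)
  have hlim : ∀ A, ∃ l ∈ Icc 0 Kp, Tendsto (fun n => lam (A \ F n)) U (𝓝 l) := by
    intro A
    exact isCompact_Icc.ultrafilter_le_nhds (U.map fun n => lam (A \ F n))
      (le_principal_iff.2 (Filter.mem_map.2 (Filter.univ_mem' fun n => hl1 (A \ F n))))
  choose l hll1 hll2 using hlim
  have hlX : l ∈ X := by
    refine ⟨hll1, fun A hA B hB h => ?_, fun A hA B hB h => ?_, fun A hA => ?_⟩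
    · exact le_of_tendsto_of_tendsto' (hll2 A) (hll2 B) fun n =>
        hl2 _ (h_diff A hA _ (hF n)) _ (h_diff B hB _ (hF n)) (diff_subset_diff_left h)
    · refine tendsto_nhds_unique (hll2 (A ∪ B)) (((hll2 A).add (hll2 B)).congr fun n => ?_)
      rw [union_diff_distrib]
      exact (hl3 _ (h_diff A hA _ (hF n)) _ (h_diff B hB _ (hF n))
        (h.mono diff_subset diff_subset)).symm
    · have ht1 : Tendsto (fun n => lam (A \ F n) ^ p + φ (F n) ^ p) U (𝓝 (l A ^ p + 0 ^ p)) :=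
        ((hll2 A).rpow_const (Or.inr hp0.le)).add
          ((hφF.mono_left hU1).rpow_const (Or.inr hp0.le))
      rw [Real.zero_rpow hp0.ne', add_zero] at ht1
      have : φ A ^ p ≤ l A ^ p := by
        refine ge_of_tendsto' ht1 fun n => ?_
        have hd := h_diff A hA _ (hF n)
        have hi := h_inter A hA _ (hF n)
        have h1 := hφ_upper _ hd _ hi disjoint_sdiff_inter
        rw [diff_union_inter] at h1
        have h2 := Real.rpow_le_rpow (hφ_nn _ hd) (hl4 _ hd) hp0.le
        have h3 := Real.rpow_le_rpow (hφ_nn _ hi) (hφ_mono _ hi _ (hF n) inter_subset_right) hp0.le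
        linarith
      exact (Real.rpow_le_rpow_iff (hφ_nn A hA) (hll1 A).1 hp0).1 this
  have h5 : lam univ ≤ l univ := hmin hlX
  have h6 : l univ ≤ lam univ - ε := by
    refine le_of_tendsto (hll2 univ) ?_
    filter_upwards [hU2] with n hn
    have hd := h_diff univ h_univ _ (hF n)
    have h7 := hl3 _ hd _ (hF n) disjoint_sdiff_left
    rw [diff_union_self, univ_union] at h7
    linarith
  linarith
end

section
/- Let 𝒜 be an algebra of subsets of a set Ω and let φ be a submeasure on 𝒜 such that for some constant c > 0 and some q < ∞ one has φ(A_1 ∪ ⋯ ∪ A_n) ≥ c (φ(A_1)^q + ⋯ + φ(A_n)^q)^{1/q} whenever A_1, …, A_n ∈ 𝒜 are pairwise disjoint. Then there is a finitely additive measure μ on 𝒜 which is equivalent to φ, i.e. for every sequence (A_n) in 𝒜, φ(A_n) → 0 if and only if μ(A_n) → 0. -/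
open Set Filter Topology


theorem kr_term (M n s : ℕ) (hs : 1 ≤ s) (h : 32 * M * s ≤ n) :
    ((M * n).choose s : ℝ) * (n.choose s) * (((s : ℝ) / n) ^ 3) ^ s ≤ (1 / 4) ^ s := by
  rcases Nat.eq_zero_or_pos n with hn | hn
  · subst hn
    have : (0:ℕ).choose s = 0 := Nat.choose_eq_zero_of_lt hs
    simp [this]
  have hn' : (0:ℝ) < n := by exact_mod_cast hn
  have hs' : (0:ℝ) < s := by exact_mod_cast hs
  have h1 : ((M * n).choose s : ℝ) ≤ ((M * n : ℕ) : ℝ) ^ s / s.factorial := Nat.choose_le_pow_div _ _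
  have h2 : (n.choose s : ℝ) ≤ (n : ℝ) ^ s / s.factorial := Nat.choose_le_pow_div _ _
  have h3 : (s:ℝ) ^ s / s.factorial ≤ Real.exp s := Real.pow_div_factorial_le_exp _ hs'.le _
  have h4 : Real.exp s = (Real.exp 1) ^ s := by rw [← Real.exp_nat_mul]; simp
  have h5 : (Real.exp 1) ^ 2 ≤ 8 := by
    have := Real.exp_one_lt_d9
    have h0 := Real.exp_pos 1
    nlinarith
  have hf : (0:ℝ) < s.factorial := by exact_mod_cast s.factorial_pos
  have h6 : ((s:ℝ) ^ s / s.factorial) ^ 2 ≤ 8 ^ s := by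
    calc ((s:ℝ) ^ s / s.factorial) ^ 2 ≤ (Real.exp 1 ^ s) ^ 2 := by
          rw [← h4]; gcongr
      _ = (Real.exp 1 ^ 2) ^ s := by rw [← pow_mul, ← pow_mul, mul_comm]
      _ ≤ 8 ^ s := by gcongr
  calc ((M * n).choose s : ℝ) * (n.choose s) * (((s : ℝ) / n) ^ 3) ^ s
      ≤ (((M * n : ℕ) : ℝ) ^ s / s.factorial) * ((n : ℝ) ^ s / s.factorial) * (((s : ℝ) / n) ^ 3) ^ s := by gcongr
    _ = ((s:ℝ) ^ s / s.factorial) ^ 2 * (M * s / n) ^ s := by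
        push_cast
        simp only [div_pow, mul_pow]
        rw [← pow_mul, ← pow_mul]
        field_simp
        ring
    _ ≤ 8 ^ s * (1 / 32) ^ s := by
        have hle : (M * s / n : ℝ) ≤ 1 / 32 := by
          rw [div_le_iff₀ hn']
          have : (32 * M * s : ℝ) ≤ n := by exact_mod_cast h
          linarith
        exact mul_le_mul h6 (pow_le_pow_left₀ (by positivity) hle s) (by positivity) (by positivity)
    _ = (1 / 4) ^ s := by rw [← mul_pow]; norm_num

theorem kr_graph (ι : Type*) [Fintype ι] [DecidableEq ι] [Nonempty ι] (M : ℕ) :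
    ∃ g : ι × Fin M → Fin 3 → ι, ∀ E : Finset (ι × Fin M),
      32 * M * E.card ≤ Fintype.card ι →
      E.card ≤ (E.biUnion (fun x => Finset.univ.image (g x))).card := by
  classical
  by_contra! hcon
  set n := Fintype.card ι with hn
  have hnpos : 0 < n := Fintype.card_pos
  have hn' : (0:ℝ) < n := by exact_mod_cast hnpos
  let S : Finset ℕ := (Finset.Icc 1 n).filter (fun s => 32 * M * s ≤ n)
  let T (E : Finset (ι × Fin M)) (F : Finset ι) : Finset (ι × Fin M → Fin 3 → ι) :=
    Fintype.piFinset (fun x => Fintype.piFinset fun _ => if x ∈ E then F else Finset.univ)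
  have hcov : (Finset.univ : Finset (ι × Fin M → Fin 3 → ι)) ⊆
      S.biUnion (fun s => (Finset.powersetCard s (Finset.univ : Finset (ι × Fin M))).biUnion
        (fun E => (Finset.powersetCard s (Finset.univ : Finset ι)).biUnion (fun F => T E F))) := by
    intro g _
    obtain ⟨E, hE, hlt⟩ := hcon g
    have hE1 : 1 ≤ E.card := by omega
    have hM : 1 ≤ M := by
      obtain ⟨x, _⟩ := Finset.card_pos.1 hE1
      exact x.2.pos
    have hEn : E.card ≤ n := by nlinarith
    obtain ⟨F, hF, hFc⟩ := Finset.exists_superset_card_eq hlt.le (by simpa using hEn)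
    simp only [Finset.mem_biUnion]
    refine ⟨E.card, by simp [S]; exact ⟨⟨by simpa [Finset.nonempty_iff_ne_empty] using Finset.card_pos.1 hE1, hEn⟩, hE⟩, E, by simp, F, by simp [hFc], ?_⟩
    simp only [T, Fintype.mem_piFinset]
    intro x j
    split_ifs with hx
    · exact hF (Finset.mem_biUnion.2 ⟨x, hx, by simp⟩)
    · simp
  have hT : ∀ s, ∀ E ∈ Finset.powersetCard s (Finset.univ : Finset (ι × Fin M)),
      ∀ F ∈ Finset.powersetCard s (Finset.univ : Finset ι),
      ((T E F).card : ℝ) = (n:ℝ) ^ (3 * (n * M)) * (((s:ℝ) / n) ^ 3) ^ s := by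
    intro s E hE F hF
    rw [Finset.mem_powersetCard] at hE hF
    have : (n:ℝ) ^ (3 * (n * M)) = ∏ x : ι × Fin M, (n:ℝ) ^ 3 := by
      simp [← hn, ← pow_mul]
    have h2 : (((s:ℝ) / n) ^ 3) ^ s = ∏ x : ι × Fin M, if x ∈ E then ((s:ℝ) / n) ^ 3 else 1 := by
      rw [Finset.prod_ite_mem]; simp [hE.2]
    rw [this, h2, ← Finset.prod_mul_distrib]
    simp only [T, Fintype.card_piFinset, Nat.cast_prod]
    refine Finset.prod_congr rfl fun x _ => ?_
    split_ifs with hx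
    · simp [hF.2]; field_simp
    · simp [← hn]
  have hc := Finset.card_le_card hcov
  have hc2 : ((Finset.univ : Finset (ι × Fin M → Fin 3 → ι)).card : ℝ) ≤
      ∑ s ∈ S, ∑ E ∈ Finset.powersetCard s (Finset.univ : Finset (ι × Fin M)),
        ∑ F ∈ Finset.powersetCard s (Finset.univ : Finset ι), ((T E F).card : ℝ) := by
    refine le_trans (Nat.cast_le.2 hc) ?_
    refine le_trans (Nat.cast_le.2 Finset.card_biUnion_le) ?_
    push_cast
    refine Finset.sum_le_sum fun s _ => ?_
    refine le_trans (Nat.cast_le.2 Finset.card_biUnion_le) ?_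
    push_cast
    refine Finset.sum_le_sum fun E _ => ?_
    refine le_trans (Nat.cast_le.2 Finset.card_biUnion_le) ?_
    push_cast
    rfl
  have hu : ((Finset.univ : Finset (ι × Fin M → Fin 3 → ι)).card : ℝ) = (n:ℝ) ^ (3 * (n * M)) := by
    simp [← hn, ← pow_mul]
  have h3 : ∑ s ∈ S, ∑ E ∈ Finset.powersetCard s (Finset.univ : Finset (ι × Fin M)),
        ∑ F ∈ Finset.powersetCard s (Finset.univ : Finset ι), ((T E F).card : ℝ)
      ≤ ∑ s ∈ S, (n:ℝ) ^ (3 * (n * M)) * (1/4) ^ s := by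
    refine Finset.sum_le_sum fun s hs => ?_
    simp only [S, Finset.mem_filter, Finset.mem_Icc] at hs
    rw [Finset.sum_congr rfl fun E hE => Finset.sum_congr rfl fun F hF => hT s E hE F hF]
    simp only [Finset.sum_const, Finset.card_powersetCard, Finset.card_univ, Fintype.card_prod,
      Fintype.card_fin, ← hn, nsmul_eq_mul]
    have := kr_term M n s hs.1.1 hs.2
    rw [mul_comm n M]
    calc _ = (n:ℝ) ^ (3 * (M * n)) * (((M * n).choose s : ℝ) * (n.choose s) * (((s : ℝ) / n) ^ 3) ^ s) := by ring
      _ ≤ _ := by gcongr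
  have h4 : ∑ s ∈ S, ((1:ℝ)/4) ^ s ≤ 1/3 := by
    calc ∑ s ∈ S, ((1:ℝ)/4) ^ s ≤ ∑ s ∈ Finset.Icc 1 n, ((1:ℝ)/4) ^ s :=
          Finset.sum_le_sum_of_subset_of_nonneg (Finset.filter_subset _ _) (fun _ _ _ => by positivity)
      _ ≤ 1/3 := by
        have : ∀ m : ℕ, ∑ s ∈ Finset.Icc 1 m, ((1:ℝ)/4) ^ s = 1/3 - (1/3) * (1/4)^m := by
          intro m
          induction m with
          | zero => simp
          | succ k ih => rw [Finset.sum_Icc_succ_top (by omega), ih]; ring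
        rw [this]
        have : (0:ℝ) < (1/4)^n := by positivity
        linarith
  rw [← Finset.mul_sum] at h3
  rw [hu] at hc2
  have hp : (0:ℝ) < (n:ℝ) ^ (3 * (n * M)) := by positivity
  nlinarith [hc2.trans h3]

structure KRAlg {Ω : Type*} (𝒜 : Set (Set Ω)) (φ : Set Ω → ℝ) : Prop where
  empty : (∅ : Set Ω) ∈ 𝒜
  univ_mem : (Set.univ : Set Ω) ∈ 𝒜
  compl : ∀ A ∈ 𝒜, Aᶜ ∈ 𝒜
  union : ∀ A ∈ 𝒜, ∀ B ∈ 𝒜, A ∪ B ∈ 𝒜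
  phi_empty : φ ∅ = 0
  mono : ∀ A ∈ 𝒜, ∀ B ∈ 𝒜, A ⊆ B → φ A ≤ φ B
  sub : ∀ A ∈ 𝒜, ∀ B ∈ 𝒜, Disjoint A B → φ (A ∪ B) ≤ φ A + φ B

namespace KRAlg
variable {Ω : Type*} {𝒜 : Set (Set Ω)} {φ : Set Ω → ℝ}

theorem inter (H : KRAlg 𝒜 φ) {A B : Set Ω} (hA : A ∈ 𝒜) (hB : B ∈ 𝒜) : A ∩ B ∈ 𝒜 := by
  have := H.compl _ (H.union _ (H.compl _ hA) _ (H.compl _ hB))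
  simpa [compl_union] using this

theorem diff (H : KRAlg 𝒜 φ) {A B : Set Ω} (hA : A ∈ 𝒜) (hB : B ∈ 𝒜) : A \ B ∈ 𝒜 := by
  rw [sdiff_eq]; exact H.inter hA (H.compl _ hB)

theorem nonneg (H : KRAlg 𝒜 φ) {A : Set Ω} (hA : A ∈ 𝒜) : 0 ≤ φ A := by
  rw [← H.phi_empty]; exact H.mono _ H.empty _ hA (empty_subset _)

theorem sub' (H : KRAlg 𝒜 φ) {A B : Set Ω} (hA : A ∈ 𝒜) (hB : B ∈ 𝒜) :
    φ (A ∪ B) ≤ φ A + φ B := by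
  have h1 := H.sub A hA (B \ A) (H.diff hB hA) disjoint_sdiff_right
  have h2 := H.mono _ (H.diff hB hA) _ hB sdiff_subset
  rw [union_sdiff_self] at h1
  linarith

theorem biUnion (H : KRAlg 𝒜 φ) {κ : Type*} (s : Finset κ) (b : κ → Set Ω)
    (hb : ∀ k ∈ s, b k ∈ 𝒜) : (⋃ k ∈ s, b k) ∈ 𝒜 := by
  classical
  induction s using Finset.induction_on with
  | empty => simpa using H.empty
  | insert a s ha ih =>
    rw [Finset.set_biUnion_insert]
    exact H.union _ (hb a (by simp)) _ (ih fun k hk => hb k (by simp [hk]))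

theorem biInter (H : KRAlg 𝒜 φ) {κ : Type*} (s : Finset κ) (b : κ → Set Ω)
    (hb : ∀ k ∈ s, b k ∈ 𝒜) : (⋂ k ∈ s, b k) ∈ 𝒜 := by
  classical
  induction s using Finset.induction_on with
  | empty => simpa using H.univ_mem
  | insert a s ha ih =>
    rw [Finset.set_biInter_insert]
    exact H.inter (hb a (by simp)) (ih fun k hk => hb k (by simp [hk]))

open Classical in
theorem pattern (H : KRAlg 𝒜 φ) {κ : Type*} [Fintype κ] (b : κ → Set Ω)
    (hb : ∀ k, b k ∈ 𝒜) (P : Finset κ → Prop) :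
    {ω | P (Finset.univ.filter (fun k => ω ∈ b k))} ∈ 𝒜 := by
  have h1 : ∀ E : Finset κ, {ω | Finset.univ.filter (fun k => ω ∈ b k) = E} ∈ 𝒜 := by
    intro E
    have : {ω | Finset.univ.filter (fun k => ω ∈ b k) = E} =
        ⋂ k ∈ (Finset.univ : Finset κ), (if k ∈ E then b k else (b k)ᶜ) := by
      ext ω
      simp only [mem_ofPred_eq, Finset.ext_iff, Finset.mem_filter, Finset.mem_univ, true_and,
        mem_iInter, forall_true_left]
      refine forall_congr' fun k => ?_
      by_cases hk : k ∈ E <;> simp [hk]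
    rw [this]
    refine H.biInter _ _ fun k _ => ?_
    split_ifs
    · exact hb k
    · exact H.compl _ (hb k)
  have h2 : {ω | P (Finset.univ.filter (fun k => ω ∈ b k))} =
      ⋃ E ∈ (Finset.univ.filter P : Finset (Finset κ)),
        {ω | Finset.univ.filter (fun k => ω ∈ b k) = E} := by
    ext ω; simp
  rw [h2]
  exact H.biUnion _ _ fun E _ => h1 E

open Classical in
theorem intersection (H : KRAlg 𝒜 φ) {ε : ℝ} (M : ℕ)
    (hM : ∀ (n : ℕ) (A : Fin n → Set Ω), (∀ i, A i ∈ 𝒜) →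
      Pairwise (Function.onFun Disjoint A) → (∀ i, ε / 3 ≤ φ (A i)) → n < M)
    {ι : Type*} [Fintype ι] [Nonempty ι] (a : ι → Set Ω) (ha : ∀ i, a i ∈ 𝒜)
    (hε : ∀ i, ε ≤ φ (a i)) :
    ∃ ω, Fintype.card ι < 32 * M ^ 2 * (Finset.univ.filter (fun i => ω ∈ a i)).card := by
  by_contra! hcon
  obtain ⟨g, hg⟩ := kr_graph ι M
  let b : ι × Fin M → Set Ω := fun x => a x.1
  let I : Ω → Finset (ι × Fin M) := fun ω => Finset.univ.filter (fun x => ω ∈ b x)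
  have hI : ∀ ω, 32 * M * (I ω).card ≤ Fintype.card ι := by
    intro ω
    have : I ω = (Finset.univ.filter (fun i => ω ∈ a i)) ×ˢ (Finset.univ : Finset (Fin M)) := by
      ext x; simp [I, b]
    rw [this, Finset.card_product, Finset.card_univ, Fintype.card_fin]
    refine le_trans (le_of_eq ?_) (hcon ω)
    ring
  have hall : ∀ E : Finset (ι × Fin M), ∃ f : ι × Fin M → ι,
      32 * M * E.card ≤ Fintype.card ι → InjOn f E ∧ ∀ x ∈ E, ∃ j, g x j = f x := by
    intro E
    by_cases hE : 32 * M * E.card ≤ Fintype.card ι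
    swap
    · exact ⟨fun x => x.1, fun h => absurd h hE⟩
    have := (Finset.all_card_le_biUnion_card_iff_exists_injective
      (fun x : E => Finset.univ.image (g x.1))).1 (by
        intro s
        have h1 := hg (s.map (Function.Embedding.subtype _)) (by
          rw [Finset.card_map]
          refine le_trans (Nat.mul_le_mul_left _ ?_) hE
          simpa using Finset.card_le_univ s)
        rw [Finset.card_map] at h1
        convert h1 using 2
        ext y; simp)
    obtain ⟨f, hf, hf2⟩ := this
    refine ⟨fun x => if hx : x ∈ E then f ⟨x, hx⟩ else x.1, fun _ => ⟨?_, ?_⟩⟩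
    · intro x hx y hy hxy
      have hx' : x ∈ E := hx
      have hy' : y ∈ E := hy
      simp only [hx', hy', dif_pos] at hxy
      simpa using hf hxy
    · intro x hx
      have := hf2 ⟨x, hx⟩
      simpa [hx] using this
  choose F hF using hall
  let d : ι × Fin M → ι → Set Ω := fun x y => {ω | x ∈ I ω ∧ F (I ω) x = y}
  have hd : ∀ x y, d x y ∈ 𝒜 := fun x y =>
    H.pattern b (fun x => ha x.1) (fun E => x ∈ E ∧ F E x = y)
  have hdisj : ∀ y x x', x ≠ x' → Disjoint (d x y) (d x' y) := by
    intro y x x' hne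
    rw [Set.disjoint_left]
    rintro ω ⟨h1, h2⟩ ⟨h3, h4⟩
    exact hne ((hF (I ω) (hI ω)).1 h1 h3 (h2.trans h4.symm))
  have hj : ∀ x, ∃ j, ε / 3 ≤ φ (d x (g x j)) := by
    intro x
    by_contra! hlt
    have hsub : a x.1 ⊆ d x (g x 0) ∪ d x (g x 1) ∪ d x (g x 2) := by
      intro ω hω
      have hx : x ∈ I ω := by simpa [I, b] using hω
      obtain ⟨j, hj⟩ := (hF (I ω) (hI ω)).2 x hx
      have : ω ∈ d x (g x j) := ⟨hx, hj.symm⟩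
      fin_cases j
      · exact Or.inl (Or.inl this)
      · exact Or.inl (Or.inr this)
      · exact Or.inr this
    have h01 := H.union _ (hd x (g x 0)) _ (hd x (g x 1))
    have e1 := H.mono _ (ha x.1) _ (H.union _ h01 _ (hd x (g x 2))) hsub
    have e2 := H.sub' h01 (hd x (g x 2))
    have e3 := H.sub' (hd x (g x 0)) (hd x (g x 1))
    have := hlt 0
    have := hlt 1
    have := hlt 2
    have := hε x.1
    linarith
  choose j hj using hj
  obtain ⟨y, hy⟩ := Fintype.exists_le_card_fiber_of_mul_le_card (n := M)
    (fun x : ι × Fin M => g x (j x)) (by simp)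
  set s := (Finset.univ.filter (fun x : ι × Fin M => g x (j x) = y)) with hs
  have := hM s.card (fun i => d (s.equivFin.symm i) y) (fun i => hd _ _) (by
    intro i i' hne
    apply hdisj
    intro h
    exact hne (s.equivFin.symm.injective (Subtype.ext h))) (by
    intro i
    have h1 := (Finset.mem_filter.1 (s.equivFin.symm i).2).2
    have h2 := hj (s.equivFin.symm i).1
    rw [h1] at h2
    exact h2)
  omega


open Classical in
theorem _root_.kr_kelley {Ω : Type*} (𝒮 : Set (Set Ω)) (K : ℕ) (hK : 0 < K)
    (h : ∀ (ι : Type) [Fintype ι] [Nonempty ι] (a : ι → Set Ω), (∀ i, a i ∈ 𝒮) →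
      ∃ ω, Fintype.card ι < K * (Finset.univ.filter (fun i => ω ∈ a i)).card) :
    ∃ (μ : Set Ω → ℝ) (u : ℝ), 0 < u ∧ (∀ A, 0 ≤ μ A) ∧
      (∀ A B, Disjoint A B → μ (A ∪ B) = μ A + μ B) ∧ ∀ A ∈ 𝒮, u ≤ μ A := by
  let _ : TopologicalSpace Ω := ⊥
  have : DiscreteTopology Ω := ⟨rfl⟩
  let e : Set Ω → BoundedContinuousFunction Ω ℝ := fun A =>
    BoundedContinuousFunction.mkOfDiscrete (A.indicator (fun _ => (1:ℝ))) 1 (by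
      intro x y
      simp only [Set.indicator]
      split_ifs <;> simp)
  have he : ∀ A ω, e A ω = A.indicator (fun _ => (1:ℝ)) ω := fun A ω => rfl
  have hKr : (0:ℝ) < K := by exact_mod_cast hK
  let U : Set (BoundedContinuousFunction Ω ℝ) := {f | ∃ t < 1 / (2 * (K:ℝ)), ∀ ω, f ω ≤ t}
  have hUc : Convex ℝ U := by
    rintro f ⟨t, ht, hf⟩ g ⟨t', ht', hg⟩ a b ha hb hab
    refine ⟨max t t', max_lt ht ht', fun ω => ?_⟩
    have h1 := mul_le_mul_of_nonneg_left ((hf ω).trans (le_max_left t t')) ha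
    have h2 := mul_le_mul_of_nonneg_left ((hg ω).trans (le_max_right t t')) hb
    have : (a • f + b • g) ω = a * f ω + b * g ω := by simp
    rw [this]
    calc _ ≤ a * max t t' + b * max t t' := add_le_add h1 h2
      _ = max t t' := by rw [← add_mul, hab, one_mul]
  have hUo : IsOpen U := by
    rw [Metric.isOpen_iff]
    rintro f ⟨t, ht, hf⟩
    refine ⟨(1 / (2 * (K:ℝ)) - t) / 2, by linarith, fun g hg => ?_⟩
    refine ⟨t + (1 / (2 * (K:ℝ)) - t) / 2, by linarith, fun ω => ?_⟩
    have h1 := BoundedContinuousFunction.dist_coe_le_dist (f := g) (g := f) ω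
    rw [Metric.mem_ball] at hg
    rw [Real.dist_eq] at h1
    have := le_abs_self (g ω - f ω)
    have := hf ω
    linarith
  have hdisj : Disjoint U (convexHull ℝ (e '' 𝒮)) := by
    rw [Set.disjoint_left]
    rintro f ⟨t, ht, hf⟩ hfC
    rw [mem_convexHull_iff_exists_fintype] at hfC
    obtain ⟨κ, _, w, z, hw, hw1, hz, hs⟩ := hfC
    choose a ha hae using hz
    have hκ : Nonempty κ := by
      by_contra hne
      rw [not_nonempty_iff] at hne
      simp at hw1
    let m : ℕ := Fintype.card κ
    have hm : 0 < m := Fintype.card_pos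
    let N : ℕ := 2 * K * m
    have hN : 0 < N := by positivity
    let n : κ → ℕ := fun i => ⌈(N:ℝ) * w i⌉₊
    have hn1 : ∀ i, (N:ℝ) * w i ≤ n i := fun i => Nat.le_ceil _
    have hn2 : ∀ i, (n i : ℝ) ≤ N * w i + 1 := fun i =>
      (Nat.ceil_lt_add_one (mul_nonneg (Nat.cast_nonneg _) (hw i))).le
    have hsum : (N:ℝ) ≤ ∑ i, (n i : ℝ) := by
      calc (N:ℝ) = ∑ i, (N:ℝ) * w i := by rw [← Finset.mul_sum, hw1, mul_one]
        _ ≤ _ := Finset.sum_le_sum fun i _ => hn1 i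
    have hcard : Fintype.card (Σ i, Fin (n i)) = ∑ i, n i := by simp
    have hpos : 0 < Fintype.card (Σ i, Fin (n i)) := by
      rw [hcard]
      have : (0:ℝ) < ∑ i, (n i : ℝ) := lt_of_lt_of_le (by exact_mod_cast hN) hsum
      exact_mod_cast this
    have := Fintype.card_pos_iff.1 hpos
    obtain ⟨ω, hω⟩ := h (Σ i, Fin (n i)) (fun x => a x.1) (fun x => ha x.1)
    have hcnt : (Finset.univ.filter (fun x : Σ i, Fin (n i) => ω ∈ a x.1)).card
        = ∑ i, if ω ∈ a i then n i else 0 := by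
      rw [Finset.card_filter, Fintype.sum_sigma]
      refine Finset.sum_congr rfl fun i _ => ?_
      split_ifs with hi <;> simp
    rw [hcard, hcnt] at hω
    have hω' : ∑ i, (n i : ℝ) < K * ∑ i, (if ω ∈ a i then (n i : ℝ) else 0) := by
      exact_mod_cast hω
    have hfω : f ω = ∑ i, w i * (if ω ∈ a i then 1 else 0) := by
      rw [← hs, BoundedContinuousFunction.sum_apply]
      refine Finset.sum_congr rfl fun i _ => ?_
      rw [← hae i, BoundedContinuousFunction.smul_apply, he, smul_eq_mul, Set.indicator_apply]
    have hle : ∑ i, (if ω ∈ a i then (n i : ℝ) else 0) ≤ N * f ω + m := by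
      rw [hfω, Finset.mul_sum]
      have : (m:ℝ) = ∑ i : κ, (1:ℝ) := by simp [m]
      rw [this, ← Finset.sum_add_distrib]
      refine Finset.sum_le_sum fun i _ => ?_
      split_ifs
      · simpa using hn2 i
      · simp
    have hft : f ω ≤ 1 / (2 * K) := (hf ω).trans ht.le
    have hNr : (N:ℝ) = 2 * K * m := by simp [N]
    have h1 : (N:ℝ) * f ω ≤ m := by
      calc (N:ℝ) * f ω ≤ N * (1 / (2 * K)) := by gcongr
        _ = m := by rw [hNr]; field_simp
    have h2 : (K:ℝ) * ∑ i, (if ω ∈ a i then (n i : ℝ) else 0) ≤ K * (m + m) := by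
      gcongr
      linarith
    nlinarith
  obtain ⟨f, u, hf1, hf2⟩ := geometric_hahn_banach_open hUc hUo (convex_convexHull ℝ _) hdisj
  have hu : 0 < u := by
    have := hf1 0 ⟨0, by positivity, fun ω => by simp⟩
    simpa using this
  refine ⟨fun A => f (e A), u, hu, ?_, ?_, ?_⟩
  · intro A
    by_contra! hneg
    have := hf1 ((u / f (e A)) • e A) ⟨0, by positivity, fun ω => by
      have : u / f (e A) ≤ 0 := (div_neg_of_pos_of_neg hu hneg).le
      have h2 : 0 ≤ e A ω := by rw [he]; exact Set.indicator_nonneg (fun _ _ => zero_le_one) _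
      simpa using mul_nonpos_of_nonpos_of_nonneg this h2⟩
    rw [map_smul, smul_eq_mul, div_mul_cancel₀ _ hneg.ne] at this
    exact lt_irrefl _ this
  · intro A B hAB
    have : e (A ∪ B) = e A + e B := by
      ext ω
      rw [BoundedContinuousFunction.add_apply, he, he, he, Set.indicator_union_of_disjoint hAB]
    simp only [this, map_add]
  · intro A hA
    exact hf2 _ (subset_convexHull ℝ _ ⟨A, hA, rfl⟩)

/-- Lebesgue decomposition. -/
theorem lebesgue (H : KRAlg 𝒜 φ) (μ : Set Ω → ℝ) (hμ0 : ∀ A, 0 ≤ μ A)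
    (hμ : ∀ A B, Disjoint A B → μ (A ∪ B) = μ A + μ B)
    (hac : ∀ ε > 0, ∃ δ > 0, ∀ A ∈ 𝒜, μ A < δ → φ A < ε) :
    ∃ ν : Set Ω → ℝ,
      ν ∅ = 0 ∧
      (∀ A ∈ 𝒜, ∀ B ∈ 𝒜, A ⊆ B → ν A ≤ ν B) ∧
      (∀ A ∈ 𝒜, ∀ B ∈ 𝒜, Disjoint A B → ν (A ∪ B) = ν A + ν B) ∧
      (∀ A ∈ 𝒜, 0 ≤ ν A) ∧
      (∀ ε > 0, ∃ δ > 0, ∀ A ∈ 𝒜, ν A < δ → φ A < ε) ∧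
      (∀ ε > 0, ∃ δ > 0, ∀ A ∈ 𝒜, φ A < δ → ν A < ε) := by
  have hmono : ∀ A B, A ⊆ B → μ A ≤ μ B := by
    intro A B hAB
    have := hμ A (B \ A) disjoint_sdiff_right
    rw [union_sdiff_cancel hAB] at this
    linarith [hμ0 (B \ A)]
  have hμe : μ ∅ = 0 := by
    have := hμ ∅ ∅ (by simp)
    simp at this
    exact this
  let δ : ℕ → ℝ := fun k => (1/2) ^ k
  have hδ : ∀ k, 0 < δ k := fun k => by positivity
  have hδ2 : ∀ k, δ (k+1) + δ (k+1) = δ k := fun k => by simp only [δ]; ring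
  let m : ℕ → Set Ω → ℝ := fun k A => sInf {r | ∃ B ∈ 𝒜, φ B ≤ δ k ∧ r = μ (A \ B)}
  have hbdd : ∀ k A, BddBelow {r | ∃ B ∈ 𝒜, φ B ≤ δ k ∧ r = μ (A \ B)} := by
    rintro k A
    exact ⟨0, by rintro r ⟨B, _, _, rfl⟩; exact hμ0 _⟩
  have hne : ∀ k A, {r | ∃ B ∈ 𝒜, φ B ≤ δ k ∧ r = μ (A \ B)}.Nonempty := fun k A =>
    ⟨_, ∅, H.empty, by rw [H.phi_empty]; exact (hδ k).le, rfl⟩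
  have m_le : ∀ k A, ∀ B ∈ 𝒜, φ B ≤ δ k → m k A ≤ μ (A \ B) := fun k A B hB h =>
    csInf_le (hbdd k A) ⟨B, hB, h, rfl⟩
  have le_m : ∀ k A r, (∀ B ∈ 𝒜, φ B ≤ δ k → r ≤ μ (A \ B)) → r ≤ m k A := fun k A r h =>
    le_csInf (hne k A) (by rintro _ ⟨B, hB, h1, rfl⟩; exact h B hB h1)
  have m_nonneg : ∀ k A, 0 ≤ m k A := fun k A => le_m _ _ _ fun _ _ _ => hμ0 _
  have m_le_mu : ∀ k A, m k A ≤ μ A := fun k A => by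
    simpa using m_le k A ∅ H.empty (by rw [H.phi_empty]; exact (hδ k).le)
  have m_mono : ∀ A, Monotone (fun k => m k A) := fun A =>
    monotone_nat_of_le_succ fun k => le_m _ _ _ fun B hB h =>
      m_le _ _ B hB (h.trans (by linarith [hδ2 k, hδ (k+1)]))
  have hlim : ∀ A, Tendsto (fun k => m k A) atTop (𝓝 (⨆ k, m k A)) := fun A =>
    tendsto_atTop_ciSup (m_mono A) ⟨μ A, by rintro _ ⟨k, rfl⟩; exact m_le_mu k A⟩
  have m_le_nu : ∀ k A, m k A ≤ ⨆ k, m k A := fun k A =>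
    le_ciSup (f := fun k => m k A) ⟨μ A, by rintro _ ⟨k, rfl⟩; exact m_le_mu k A⟩ k
  have hsplit : ∀ A ∈ 𝒜, ∀ B ∈ 𝒜, Disjoint A B → ∀ k, m k A + m k B ≤ m k (A ∪ B) := by
    intro A hA B hB hAB k
    refine le_m _ _ _ fun C hC h => ?_
    rw [union_sdiff_distrib, hμ _ _ (hAB.mono sdiff_subset sdiff_subset)]
    exact add_le_add (m_le _ _ C hC h) (m_le _ _ C hC h)
  have hjoin : ∀ A ∈ 𝒜, ∀ B ∈ 𝒜, Disjoint A B → ∀ k,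
      m k (A ∪ B) ≤ m (k+1) A + m (k+1) B := by
    intro A hA B hB hAB k
    rw [← sub_le_iff_le_add]
    refine le_m _ _ _ fun C hC h => ?_
    rw [sub_le_comm]
    refine le_m _ _ _ fun D hD h' => ?_
    have h1 := m_le k (A ∪ B) (C ∪ D) (H.union _ hC _ hD)
      ((H.sub' hC hD).trans (by linarith [hδ2 k]))
    rw [union_sdiff_distrib, hμ _ _ (hAB.mono sdiff_subset sdiff_subset)] at h1
    have h2 := hmono (A \ (C ∪ D)) (A \ C) (sdiff_subset_sdiff_right subset_union_left)
    have h3 := hmono (B \ (C ∪ D)) (B \ D) (sdiff_subset_sdiff_right subset_union_right)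
    linarith
  have hadd : ∀ A ∈ 𝒜, ∀ B ∈ 𝒜, Disjoint A B →
      (⨆ k, m k (A ∪ B)) = (⨆ k, m k A) + ⨆ k, m k B := by
    intro A hA B hB hAB
    apply le_antisymm
    · exact le_of_tendsto_of_tendsto' (hlim (A ∪ B))
        (((tendsto_add_atTop_iff_nat 1).2 (hlim A)).add ((tendsto_add_atTop_iff_nat 1).2 (hlim B)))
        (hjoin A hA B hB hAB)
    · exact le_of_tendsto_of_tendsto' ((hlim A).add (hlim B)) (hlim (A ∪ B)) (hsplit A hA B hB hAB)
  have hnn : ∀ A, 0 ≤ ⨆ k, m k A := fun A => (m_nonneg 0 A).trans (m_le_nu 0 A)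
  refine ⟨fun A => ⨆ k, m k A, ?_, ?_, hadd, fun A _ => hnn A, ?_, ?_⟩
  · have := hadd ∅ H.empty ∅ H.empty (by simp)
    simp only [union_self] at this
    show (⨆ k, m k ∅) = 0
    linarith
  · intro A hA B hB hAB
    have := hadd A hA (B \ A) (H.diff hB hA) disjoint_sdiff_right
    rw [union_sdiff_cancel hAB] at this
    show (⨆ k, m k A) ≤ ⨆ k, m k B
    linarith [hnn (B \ A)]
  · intro ε hε
    obtain ⟨η, hη, h⟩ := hac (ε / 2) (by linarith)
    obtain ⟨k, hk⟩ := exists_pow_lt_of_lt_one (show 0 < ε / 2 by linarith)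
      (show (1/2 : ℝ) < 1 by norm_num)
    refine ⟨η, hη, fun A hA hlt => ?_⟩
    have h1 : m k A < η := (m_le_nu k A).trans_lt hlt
    obtain ⟨_, ⟨B, hB, hB1, rfl⟩, hB2⟩ := exists_lt_of_csInf_lt (hne k A) h1
    have h2 := h _ (H.diff hA hB) hB2
    have h3 := H.sub' hB (H.diff hA hB)
    have h4 := H.mono A hA _ (H.union _ hB _ (H.diff hA hB)) (by rw [union_sdiff_self]; exact subset_union_right)
    have : δ k < ε / 2 := hk
    linarith
  · intro ε hε
    have h1 : ∀ᶠ k in atTop, (⨆ k, m k univ) - ε < m k univ :=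
      (hlim univ).eventually_const_lt (by linarith)
    obtain ⟨k, hk⟩ := h1.exists
    refine ⟨δ (k+1), hδ _, fun A hA hlt => ?_⟩
    have h2 := hadd A hA Aᶜ (H.compl _ hA) disjoint_compl_right
    rw [union_compl_self] at h2
    have h3 : m k univ ≤ m (k+1) Aᶜ := by
      refine le_m _ _ _ fun B hB h => ?_
      have := m_le k univ (A ∪ B) (H.union _ hA _ hB) ((H.sub' hA hB).trans (by linarith [hδ2 k]))
      rwa [show univ \ (A ∪ B) = Aᶜ \ B by ext; simp] at this
    have h4 := m_le_nu (k+1) Aᶜ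
    show (⨆ k, m k A) < ε
    linarith

theorem combine (H : KRAlg 𝒜 φ)
    (h : ∀ k : ℕ, ∃ (μ : Set Ω → ℝ) (u : ℝ), 0 < u ∧ (∀ A, 0 ≤ μ A) ∧
      (∀ A B, Disjoint A B → μ (A ∪ B) = μ A + μ B) ∧
      ∀ A ∈ {A | A ∈ 𝒜 ∧ 1 / ((k:ℝ) + 1) ≤ φ A}, u ≤ μ A) :
    ∃ μ : Set Ω → ℝ, (∀ A, 0 ≤ μ A) ∧ (∀ A B, Disjoint A B → μ (A ∪ B) = μ A + μ B) ∧
      (∀ ε > 0, ∃ δ > 0, ∀ A ∈ 𝒜, μ A < δ → φ A < ε) := by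
  choose μ u hu h0 hadd hle using h
  have hmono : ∀ k A, μ k A ≤ μ k univ := by
    intro k A
    have := hadd k A Aᶜ disjoint_compl_right
    rw [union_compl_self] at this
    linarith [h0 k Aᶜ]
  let t : Set Ω → ℕ → ℝ := fun A k => (1/2)^k * (μ k A / (μ k univ + 1))
  have hpos : ∀ k, 0 < μ k univ + 1 := fun k => by linarith [h0 k univ]
  have ht0 : ∀ A k, 0 ≤ t A k := fun A k =>
    mul_nonneg (by positivity) (div_nonneg (h0 k A) (hpos k).le)
  have hs : ∀ A, Summable (t A) := fun A => by
    refine Summable.of_nonneg_of_le (ht0 A) (fun k => ?_) summable_geometric_two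
    refine mul_le_of_le_one_right (by positivity) ?_
    rw [div_le_one (hpos k)]
    linarith [hmono k A]
  refine ⟨fun A => ∑' k, t A k, fun A => tsum_nonneg (ht0 A), fun A B hAB => ?_, fun ε hε => ?_⟩
  · rw [← (hs A).tsum_add (hs B)]
    refine tsum_congr fun k => ?_
    simp only [t, hadd k A B hAB]
    ring
  · obtain ⟨k, hk⟩ := exists_nat_one_div_lt hε
    refine ⟨(1/2)^k * (u k / (μ k univ + 1)), mul_pos (by positivity) (div_pos (hu k) (hpos k)),
      fun A hA hlt => ?_⟩
    by_contra! hge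
    have h1 := hle k A ⟨hA, hk.le.trans hge⟩
    have h2 : t A k ≤ ∑' k, t A k := (hs A).le_tsum k (fun j _ => ht0 A j)
    have h3 : (1/2)^k * (u k / (μ k univ + 1)) ≤ t A k := by
      have := hpos k
      simp only [t]
      gcongr
    linarith

end KRAlg

theorem submeasure_crude_lower_estimate_equivalent_measure
    {Ω : Type*} (𝒜 : Set (Set Ω))
    (h_empty : (∅ : Set Ω) ∈ 𝒜) (h_univ : (univ : Set Ω) ∈ 𝒜)
    (h_compl : ∀ A ∈ 𝒜, Aᶜ ∈ 𝒜)
    (h_union : ∀ A ∈ 𝒜, ∀ B ∈ 𝒜, A ∪ B ∈ 𝒜)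
    (φ : Set Ω → ℝ)
    (hφ_empty : φ ∅ = 0)
    (hφ_mono : ∀ A ∈ 𝒜, ∀ B ∈ 𝒜, A ⊆ B → φ A ≤ φ B)
    (hφ_sub : ∀ A ∈ 𝒜, ∀ B ∈ 𝒜, Disjoint A B → φ (A ∪ B) ≤ φ A + φ B)
    (c q : ℝ) (hc : 0 < c) (hq : 0 < q)
    (hφ_lower : ∀ (n : ℕ) (A : Fin n → Set Ω), (∀ i, A i ∈ 𝒜) →
      Pairwise (Function.onFun Disjoint A) →
      c * (∑ i, φ (A i) ^ q) ^ (1 / q) ≤ φ (⋃ i, A i)) :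
    ∃ μ : Set Ω → ℝ,
      μ ∅ = 0 ∧
      (∀ A ∈ 𝒜, ∀ B ∈ 𝒜, A ⊆ B → μ A ≤ μ B) ∧
      (∀ A ∈ 𝒜, ∀ B ∈ 𝒜, Disjoint A B → μ (A ∪ B) = μ A + μ B) ∧
      (∀ A : ℕ → Set Ω, (∀ n, A n ∈ 𝒜) →
        (Tendsto (fun n => φ (A n)) atTop (𝓝 0) ↔
          Tendsto (fun n => μ (A n)) atTop (𝓝 0))) := by
  have H : KRAlg 𝒜 φ := ⟨h_empty, h_univ, h_compl, h_union, hφ_empty, hφ_mono, hφ_sub⟩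
  have hexh : ∀ t : ℝ, 0 < t → ∃ M : ℕ, ∀ (n : ℕ) (A : Fin n → Set Ω), (∀ i, A i ∈ 𝒜) →
      Pairwise (Function.onFun Disjoint A) → (∀ i, t ≤ φ (A i)) → n < M := by
    intro t ht
    obtain ⟨M, hM⟩ := exists_nat_gt ((φ univ / (c * t)) ^ q)
    refine ⟨M, fun n A hA hd ht' => ?_⟩
    have h1 := hφ_lower n A hA hd
    have h2 : φ (⋃ i, A i) ≤ φ univ := by
      refine hφ_mono _ ?_ _ h_univ (subset_univ _)
      simpa using H.biUnion Finset.univ A (fun i _ => hA i)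
    have h3 : (n:ℝ) * t ^ q ≤ ∑ i, φ (A i) ^ q := by
      have := Finset.card_nsmul_le_sum (Finset.univ : Finset (Fin n)) (fun i => φ (A i) ^ q) (t ^ q)
        (fun i _ => Real.rpow_le_rpow ht.le (ht' i) hq.le)
      simpa using this
    have h4 : ((n:ℝ) * t ^ q) ^ (1/q) ≤ φ univ / c := by
      rw [le_div_iff₀ hc, mul_comm]
      refine le_trans ?_ (h1.trans h2)
      gcongr
    have h5 : (((n:ℝ) * t ^ q) ^ (1/q)) ^ q = (n:ℝ) * t ^ q := by
      rw [← Real.rpow_mul (by positivity), one_div_mul_cancel hq.ne', Real.rpow_one]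
    have h6 : (n:ℝ) * t ^ q ≤ (φ univ / c) ^ q := by
      rw [← h5]; exact Real.rpow_le_rpow (by positivity) h4 hq.le
    have h7 : (n:ℝ) ≤ (φ univ / (c * t)) ^ q := by
      rw [← div_div, Real.div_rpow (div_nonneg (H.nonneg h_univ) hc.le) ht.le, le_div_iff₀ (by positivity)]
      exact h6
    exact_mod_cast h7.trans_lt hM
  obtain ⟨μ, hμ0, hμ, hac⟩ := H.combine (by
    intro k
    obtain ⟨M, hM⟩ := hexh (1 / ((k:ℝ) + 1) / 3) (by positivity)
    have hMpos : 0 < M := hM 0 (fun _ => ∅) (fun _ => h_empty) (fun i => i.elim0) (fun i => i.elim0)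
    exact kr_kelley _ (32 * M ^ 2) (by positivity) (fun ι _ _ a ha =>
      H.intersection M hM a (fun i => (ha i).1) (fun i => (ha i).2)))
  obtain ⟨ν, h1, h2, h3, h4, h5, h6⟩ := H.lebesgue μ hμ0 hμ hac
  refine ⟨ν, h1, h2, h3, fun A hA => ⟨fun h => ?_, fun h => ?_⟩⟩
  · rw [Metric.tendsto_nhds]
    intro ε hε
    obtain ⟨δ, hδ, hh⟩ := h6 ε hε
    filter_upwards [h.eventually_lt_const hδ] with n hn
    rw [Real.dist_0_eq_abs, abs_of_nonneg (h4 _ (hA n))]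
    exact hh _ (hA n) hn
  · rw [Metric.tendsto_nhds]
    intro ε hε
    obtain ⟨δ, hδ, hh⟩ := h5 ε hε
    filter_upwards [h.eventually_lt_const hδ] with n hn
    rw [Real.dist_0_eq_abs, abs_of_nonneg (H.nonneg (hA n))]
    exact hh _ (hA n) hn
end

section
/- Let ‖·‖_X be an admissible extended-value quasinorm on the Borel functions of a compact Hausdorff space Ω which is p-normable (i.e. ‖f + g‖_X^p ≤ ‖f‖_X^p + ‖g‖_X^p for all f, g) and satisfies a crude lower q-estimate with some constant b, where 0 < p < q < ∞. Then for every 0 < r < p the space X is r-convex: there is a constant M < ∞ (depending only on p, q, r, b) such that ‖(Σ_{i=1}^n |f_i|^r)^{1/r}‖_X ≤ M (Σ_{i=1}^n ‖f_i‖_X^r)^{1/r} for all f_1, …, f_n ∈ X. -/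
open Set Filter Topology MeasureTheory ENNReal

/-- An admissible extended-value quasinorm on the Borel functions of `Ω`. -/
structure AdmissibleQuasinorm (Ω : Type*) [TopologicalSpace Ω] [MeasurableSpace Ω] where
  N : (Ω → ℝ) → ℝ≥0∞
  mono : ∀ f g : Ω → ℝ, Measurable f → Measurable g →
    (∀ x, |f x| ≤ |g x|) → N f ≤ N g
  smul : ∀ (α : ℝ) (f : Ω → ℝ), Measurable f →
    N (fun x => α * f x) = ENNReal.ofReal |α| * N f
  quasi : ∃ C : ℝ≥0∞, ∀ f g : Ω → ℝ, Measurable f → Measurable g →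
    (∀ x, 0 ≤ f x) → (∀ x, 0 ≤ g x) → (∀ x, f x = 0 ∨ g x = 0) →
    N (fun x => f x + g x) ≤ C * (N f + N g)
  exists_pos : ∃ u : Ω → ℝ, Measurable u ∧ (∀ x, 0 < u x) ∧ 0 < N u ∧ N u < ⊤
  (cont : ∀ (f : ℕ → Ω → ℝ) (g : Ω → ℝ), (∀ n, Measurable (f n)) → Measurable g →
    (∀ n x, 0 ≤ f n x) → (∀ n x, f n x ≤ f (n + 1) x) →
    (∀ x, Tendsto (fun n => f n x) atTop (𝓝 (g x))) →
    Tendsto (fun n => N (f n)) atTop (𝓝 (N g)))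

/-- `f₁, …, fₙ` are disjointly supported. -/
def DisjSupp {Ω : Type*} {n : ℕ} (f : Fin n → Ω → ℝ) : Prop :=
  ∀ i j, i ≠ j → ∀ x, f i x = 0 ∨ f j x = 0

/-- A crude upper `p`-estimate with constant `a`. -/
def CrudeUpper {Ω : Type*} [TopologicalSpace Ω] [MeasurableSpace Ω]
    (X : AdmissibleQuasinorm Ω) (p a : ℝ) : Prop :=
  ∀ (n : ℕ) (f : Fin n → Ω → ℝ), (∀ i, Measurable (f i)) → DisjSupp f →
    X.N (fun x => ∑ i, f i x) ≤ ENNReal.ofReal a * (∑ i, X.N (f i) ^ p) ^ (1 / p)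

/-- A crude lower `q`-estimate with constant `b`. -/
def CrudeLower {Ω : Type*} [TopologicalSpace Ω] [MeasurableSpace Ω]
    (X : AdmissibleQuasinorm Ω) (q b : ℝ) : Prop :=
  ∀ (n : ℕ) (f : Fin n → Ω → ℝ), (∀ i, Measurable (f i)) → DisjSupp f →
    (∑ i, X.N (f i) ^ q) ^ (1 / q) ≤ ENNReal.ofReal b * X.N (fun x => ∑ i, f i x)

theorem kms_pi_two {J I : Type} [Fintype J] [DecidableEq J] [Fintype I] (w : J → I → ℝ)
    (hw : ∀ j, ∑ i, w j i = 1) (G H : I → ℝ) (k j : J) (hkj : k ≠ j) :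
    ∑ x : J → I, (∏ l, w l (x l)) * (G (x k) * H (x j)) =
      (∑ i, w k i * G i) * (∑ i, w j i * H i) := by
  have h := Fintype.prod_sum (fun (l : J) (i : I) =>
    w l i * ((if l = k then G i else 1) * (if l = j then H i else 1)))
  have h1 : ∀ x : J → I, (∏ l, (w l (x l) * ((if l = k then G (x l) else 1) *
      (if l = j then H (x l) else 1)))) = (∏ l, w l (x l)) * (G (x k) * H (x j)) := by
    intro x
    rw [Finset.prod_mul_distrib, Finset.prod_mul_distrib]
    simp
  rw [← Finset.sum_congr rfl (fun x _ => h1 x), ← h]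
  have h2 : ∀ l : J, (∑ i, w l i * ((if l = k then G i else 1) * (if l = j then H i else 1)))
      = (if l = k then (∑ i, w k i * G i) else 1) * (if l = j then (∑ i, w j i * H i) else 1) := by
    intro l
    by_cases hk : l = k
    · subst hk
      simp [hkj]
    · by_cases hj : l = j
      · subst hj
        simp [hk]
      · simp [hk, hj, hw]
  rw [Finset.prod_congr rfl (fun l _ => h2 l), Finset.prod_mul_distrib]
  simp

theorem kms_pi_one {J I : Type} [Fintype J] [DecidableEq J] [Fintype I] (w : J → I → ℝ)
    (hw : ∀ j, ∑ i, w j i = 1) (G : I → ℝ) (k : J) :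
    ∑ x : J → I, (∏ l, w l (x l)) * G (x k) = ∑ i, w k i * G i := by
  have h := Fintype.prod_sum (fun (l : J) (i : I) =>
    w l i * (if l = k then G i else 1))
  have h1 : ∀ x : J → I, (∏ l, (w l (x l) * (if l = k then G (x l) else 1)))
      = (∏ l, w l (x l)) * G (x k) := by
    intro x
    rw [Finset.prod_mul_distrib]
    simp
  rw [← Finset.sum_congr rfl (fun x _ => h1 x), ← h]
  have h2 : ∀ l : J, (∑ i, w l i * (if l = k then G i else 1))
      = (if l = k then (∑ i, w k i * G i) else 1) := by
    intro l
    by_cases hk : l = k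
    · subst hk
      simp
    · simp [hk, hw]
  rw [Finset.prod_congr rfl (fun l _ => h2 l)]
  simp

theorem kms_pi_tot {J I : Type} [Fintype J] [DecidableEq J] [Fintype I] (w : J → I → ℝ)
    (hw : ∀ j, ∑ i, w j i = 1) : ∑ x : J → I, (∏ l, w l (x l)) = 1 := by
  rw [← Fintype.prod_sum]
  simp [hw]

/-- Power mean inequality. -/
theorem kms_mean (t : ℝ) (ht : 1 ≤ t) (K : ℕ) (hK : 0 < K) (a : Fin K → ℝ) (ha : ∀ k, 0 ≤ a k)
    (B U : ℝ) (hB : 0 ≤ B) (hU : 0 ≤ U) (h : ∑ k, a k ^ t ≤ B * U ^ t) :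
    ∑ k, (1 / (K : ℝ)) * a k ≤ (B / K) ^ (1 / t) * U := by
  have hK' : (0 : ℝ) < K := by exact_mod_cast hK
  have ht0 : 0 < t := by linarith
  have h1 := Real.rpow_arith_mean_le_arith_mean_rpow Finset.univ (fun _ : Fin K => 1 / (K : ℝ)) a
    (fun _ _ => by positivity) (by simp [hK'.ne']) (fun k _ => ha k) ht
  rw [← Finset.mul_sum _ (fun k => a k ^ t)] at h1
  have h2 : (∑ k, (1 / (K : ℝ)) * a k) ^ t ≤ ((B / K) ^ (1 / t) * U) ^ t := by
    refine h1.trans ?_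
    rw [Real.mul_rpow (by positivity) hU, ← Real.rpow_mul (by positivity), one_div_mul_cancel ht0.ne',
      Real.rpow_one]
    calc 1 / (K : ℝ) * ∑ k, a k ^ t ≤ 1 / (K : ℝ) * (B * U ^ t) := by gcongr
      _ = _ := by ring
  exact (Real.rpow_le_rpow_iff (Finset.sum_nonneg fun k _ => mul_nonneg (by positivity) (ha k))
    (by positivity) ht0).1 h2

open Classical in
/-- Real-valued indicator. -/
noncomputable def kmsInd {V : Type} (S : Set V) (v : V) : ℝ := if v ∈ S then 1 else 0

theorem kmsInd_nonneg {V : Type} (S : Set V) (v : V) : 0 ≤ kmsInd S v := by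
  unfold kmsInd
  split_ifs <;> norm_num

/-- A subadditive set function with a lower estimate. -/
structure KmsSub (V : Type) (t B : ℝ) where
  psi : Set V → ℝ
  nonneg : ∀ S, 0 ≤ psi S
  empty : psi ∅ = 0
  mono : ∀ S T, S ⊆ T → psi S ≤ psi T
  sub : ∀ S T, psi (S ∪ T) ≤ psi S + psi T
  low : ∀ (K : ℕ) (E : Fin K → Set V), (∀ i j, i ≠ j → Disjoint (E i) (E j)) →
    ∑ k, psi (E k) ^ t ≤ B * psi Set.univ ^ t

open Classical in
theorem kms_step {V : Type} {t B : ℝ} (ht : 1 ≤ t) (hB : 0 ≤ B) (P : KmsSub V t B)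
    {I : Type} [Fintype I] (w : I → ℝ) (hw0 : ∀ i, 0 ≤ w i) (hw : ∑ i, w i = 1)
    (A : I → Set V) (ε : ℝ) (hε : ∀ v, ∑ i, w i * kmsInd (A i) v ≤ ε)
    (K : ℕ) (hK : 0 < K) :
    ∃ (I' : Type) (_ : Fintype I') (w' : I' → ℝ) (A' : I' → Set V), (∀ i, 0 ≤ w' i) ∧
      ∑ i, w' i = 1 ∧ (∀ v, ∑ i, w' i * kmsInd (A' i) v ≤ K * ε ^ 2) ∧
      ∑ i, w i * P.psi (A i) ≤ (B / K) ^ (1 / t) * P.psi Set.univ + ∑ i, w' i * P.psi (A' i) := by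
  have hK' : (0 : ℝ) < K := by exact_mod_cast hK
  have hw2 : ∀ j : Fin K, ∑ i, (fun _ : Fin K => w) j i = 1 := fun _ => hw
  set W : (Fin K → I) → ℝ := fun x => ∏ l, w (x l) with hW
  have hW0 : ∀ x, 0 ≤ W x := fun x => Finset.prod_nonneg fun l _ => hw0 _
  have hW1 : ∑ x, W x = 1 := kms_pi_tot (fun _ : Fin K => w) hw2
  set D : Fin K → (Fin K → I) → Set V := fun k x => {v | v ∈ A (x k) ∧ ∃ j, j ≠ k ∧ v ∈ A (x j)}
    with hD
  refine ⟨Fin K × (Fin K → I), inferInstance, fun y => 1 / (K : ℝ) * W y.2, fun y => D y.1 y.2,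
    fun y => mul_nonneg (by positivity) (hW0 _), ?_, ?_, ?_⟩
  · rw [Fintype.sum_prod_type]
    simp only [← Finset.mul_sum, hW1]
    simp [hK'.ne']
  · intro v
    rw [Fintype.sum_prod_type]
    have hin : ∀ i, 0 ≤ kmsInd (A i) v := fun i => kmsInd_nonneg _ _
    have he0 : 0 ≤ ∑ i, w i * kmsInd (A i) v :=
      Finset.sum_nonneg fun i _ => mul_nonneg (hw0 i) (hin i)
    have key : ∀ k : Fin K, ∑ x, 1 / (K : ℝ) * W x * kmsInd (D k x) v ≤ ε ^ 2 := by
      intro k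
      calc ∑ x, 1 / (K : ℝ) * W x * kmsInd (D k x) v
          ≤ ∑ x, ∑ j ∈ Finset.univ.filter (fun j => k ≠ j), 1 / (K : ℝ) * (W x *
            (kmsInd (A (x k)) v * kmsInd (A (x j)) v)) := by
            refine Finset.sum_le_sum fun x _ => ?_
            have hnn : ∀ j ∈ Finset.univ.filter (fun j => k ≠ j), 0 ≤ 1 / (K : ℝ) * (W x *
              (kmsInd (A (x k)) v * kmsInd (A (x j)) v)) := fun j _ =>
                mul_nonneg (by positivity) (mul_nonneg (hW0 x) (mul_nonneg (hin _) (hin _)))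
            by_cases hv : v ∈ D k x
            · obtain ⟨h1, j, hj, h2⟩ := hv
              have := Finset.single_le_sum hnn (Finset.mem_filter.2 ⟨Finset.mem_univ j, hj.symm⟩)
              refine le_trans ?_ this
              have hv : v ∈ D k x := ⟨h1, j, hj, h2⟩
              simp [kmsInd, h1, h2, hv]
            · simp only [kmsInd, hv, if_false, mul_zero]
              exact Finset.sum_nonneg hnn
        _ = ∑ j ∈ Finset.univ.filter (fun j => k ≠ j), 1 / (K : ℝ) *
            ((∑ i, w i * kmsInd (A i) v) * (∑ i, w i * kmsInd (A i) v)) := by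
            rw [Finset.sum_comm]
            refine Finset.sum_congr rfl fun j hj => ?_
            rw [← Finset.mul_sum]
            congr 1
            exact kms_pi_two (fun _ : Fin K => w) hw2 (fun i => kmsInd (A i) v)
              (fun i => kmsInd (A i) v) k j (Finset.mem_filter.1 hj).2
        _ ≤ ∑ j : Fin K, 1 / (K : ℝ) * (ε * ε) := by
            refine (Finset.sum_le_sum_of_subset_of_nonneg (Finset.filter_subset _ _)
              (fun _ _ _ => by positivity)).trans ?_
            refine Finset.sum_le_sum fun j _ => ?_
            gcongr
            · exact he0.trans (hε v)
            · exact hε v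
            · exact hε v
        _ = ε ^ 2 := by
            simp
            field_simp
    refine (Finset.sum_le_sum fun k _ => key k).trans ?_
    simp
  · have h1 : ∑ i, w i * P.psi (A i) = ∑ k : Fin K, ∑ x, 1 / (K : ℝ) * W x * P.psi (A (x k)) := by
      have : ∀ k : Fin K, ∑ x, 1 / (K : ℝ) * W x * P.psi (A (x k)) =
          1 / (K : ℝ) * ∑ i, w i * P.psi (A i) := by
        intro k
        simp only [mul_assoc]
        rw [← Finset.mul_sum]
        congr 1
        exact kms_pi_one (fun _ : Fin K => w) hw2 (fun i => P.psi (A i)) k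
      simp only [this]
      simp
      field_simp
    rw [h1, Fintype.sum_prod_type]
    have h2 : ∀ (k : Fin K) x, P.psi (A (x k)) ≤ P.psi (A (x k) \ D k x) + P.psi (D k x) := by
      intro k x
      refine le_trans (P.mono _ _ ?_) (P.sub _ _)
      rw [Set.sdiff_union_self]
      exact Set.subset_union_left
    have h3 : ∀ x, ∑ k : Fin K, 1 / (K : ℝ) * P.psi (A (x k) \ D k x) ≤
        (B / K) ^ (1 / t) * P.psi Set.univ := by
      intro x
      refine kms_mean t ht K hK _ (fun _ => P.nonneg _) B _ hB (P.nonneg _) (P.low K _ ?_)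
      intro i j hij
      rw [Set.disjoint_left]
      rintro v ⟨ha, hb⟩ ⟨hc, hd⟩
      exact hb ⟨ha, j, hij.symm, hc⟩
    calc ∑ k : Fin K, ∑ x, 1 / (K : ℝ) * W x * P.psi (A (x k))
        ≤ ∑ k : Fin K, ∑ x, (W x * (1 / (K : ℝ) * P.psi (A (x k) \ D k x)) +
            1 / (K : ℝ) * W x * P.psi (D k x)) := by
          refine Finset.sum_le_sum fun k _ => Finset.sum_le_sum fun x _ => ?_
          have := mul_le_mul_of_nonneg_left (h2 k x)
            (mul_nonneg (by positivity : 0 ≤ 1 / (K : ℝ)) (hW0 x))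
          linarith
      _ = (∑ x, W x * ∑ k : Fin K, (1 / (K : ℝ) * P.psi (A (x k) \ D k x))) +
            ∑ k : Fin K, ∑ x, 1 / (K : ℝ) * W x * P.psi (D k x) := by
          simp only [Finset.sum_add_distrib]
          rw [Finset.sum_comm]
          simp only [Finset.mul_sum]
      _ ≤ (∑ x, W x * ((B / K) ^ (1 / t) * P.psi Set.univ)) +
            ∑ k : Fin K, ∑ x, 1 / (K : ℝ) * W x * P.psi (D k x) := by
          gcongr with x
          · exact hW0 x
          · exact h3 x
      _ = _ := by rw [← Finset.sum_mul, hW1, one_mul]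

theorem kms_atoms {V : Type} [Fintype V] {t B : ℝ} (P : KmsSub V t B) (S : Finset V) :
    P.psi (S : Set V) ≤ ∑ v ∈ S, P.psi {v} := by
  classical
  induction S using Finset.induction_on with
  | empty => simp [P.empty]
  | insert a s ha ih =>
    rw [Finset.sum_insert ha, Finset.coe_insert, Set.insert_eq]
    exact (P.sub _ _).trans (by linarith)

open Classical in
theorem kms_iter {V : Type} [Fintype V] {t B : ℝ} (ht : 1 ≤ t) (hB : 0 ≤ B) (P : KmsSub V t B)
    (N : ℕ) (hN : 0 < N) (x : ℝ) (hx : x = (1 / 2) ^ (1 / t)) (hx1 : x < 1) (M : ℕ) :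
    ∀ (m : ℕ) (I : Type) [Fintype I] (w : I → ℝ) (A : I → Set V), (∀ i, 0 ≤ w i) →
      ∑ i, w i = 1 → (∀ v, ∑ i, w i * kmsInd (A i) v ≤ 1 / (2 * N * 2 ^ m)) →
      ∑ i, w i * P.psi (A i) ≤ ((B / N) ^ (1 / t) * P.psi Set.univ) * (x ^ m / (1 - x)) +
        1 / (2 * N * 2 ^ (m + M)) * ∑ v, P.psi {v} := by
  have hN' : (0 : ℝ) < N := by exact_mod_cast hN
  have hx0 : 0 ≤ x := by rw [hx]; positivity
  have hx2 : 0 < 1 - x := by linarith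
  have hU := P.nonneg Set.univ
  induction M with
  | zero =>
    intro m I _ w A hw0 hw hε
    have h1 : ∑ i, w i * P.psi (A i) ≤ 1 / (2 * N * 2 ^ m) * ∑ v, P.psi {v} := by
      calc ∑ i, w i * P.psi (A i)
          ≤ ∑ i, w i * ∑ v, kmsInd (A i) v * P.psi {v} := by
            gcongr with i
            · exact hw0 i
            have := kms_atoms P (A i).toFinset
            simp only [Set.coe_toFinset] at this
            refine this.trans (le_of_eq ?_)
            simp only [kmsInd, ite_mul, one_mul, zero_mul]
            rw [← Finset.sum_filter]
            congr 1
            ext v; simp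
        _ = ∑ v, (∑ i, w i * kmsInd (A i) v) * P.psi {v} := by
            simp only [Finset.mul_sum, Finset.sum_mul]
            rw [Finset.sum_comm]
            simp only [mul_assoc]
        _ ≤ ∑ v, 1 / (2 * N * 2 ^ m) * P.psi {v} := by
            gcongr with v
            · exact P.nonneg _
            · exact hε v
        _ = _ := by rw [Finset.mul_sum]
    have h2 : 0 ≤ ((B / N) ^ (1 / t) * P.psi Set.univ) * (x ^ m / (1 - x)) := by positivity
    rw [add_zero]
    linarith
  | succ M ih =>
    intro m I _ w A hw0 hw hε
    obtain ⟨I', _, w', A', h0, h1, h2, h3⟩ := kms_step ht hB P w hw0 hw A _ hε (N * 2 ^ m)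
      (by positivity)
    have h4 := ih (m + 1) I' w' A' h0 h1 (fun v => (h2 v).trans (le_of_eq (by
      push_cast
      field_simp
      ring)))
    refine h3.trans ?_
    have h5 : (B / ((N * 2 ^ m : ℕ) : ℝ)) ^ (1 / t) = (B / N) ^ (1 / t) * x ^ m := by
      rw [hx, ← Real.rpow_natCast, ← Real.rpow_mul (by norm_num), mul_comm (1 / t) (m : ℝ),
        Real.rpow_mul (by norm_num), Real.rpow_natCast, ← Real.mul_rpow (by positivity) (by positivity)]
      congr 1
      push_cast
      rw [one_div, inv_pow]
      field_simp
    rw [h5]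
    have h6 : (B / N) ^ (1 / t) * x ^ m * P.psi Set.univ +
        (B / N) ^ (1 / t) * P.psi Set.univ * (x ^ (m + 1) / (1 - x)) =
        (B / N) ^ (1 / t) * P.psi Set.univ * (x ^ m / (1 - x)) := by
      field_simp
      ring
    have h7 : m + (M + 1) = m + 1 + M := by ring
    rw [h7]
    linarith

open Classical in
theorem kms_small (t B : ℝ) (ht : 1 ≤ t) (hB : 0 ≤ B) : ∃ N : ℕ, 0 < N ∧
    ∀ (V : Type) [Fintype V] (P : KmsSub V t B) (I : Type) [Fintype I] (w : I → ℝ)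
      (A : I → Set V), (∀ i, 0 ≤ w i) →
      ∑ i, w i = 1 → (∀ v, ∑ i, w i * kmsInd (A i) v ≤ 1 / (2 * N)) →
      ∑ i, w i * P.psi (A i) ≤ 1 / 2 * P.psi Set.univ := by
  have ht0 : 0 < t := by linarith
  set x : ℝ := (1 / 2) ^ (1 / t) with hx
  have hx1 : x < 1 := Real.rpow_lt_one (by norm_num) (by norm_num) (by positivity)
  have hlim : Tendsto (fun N : ℕ => (B / (N : ℝ)) ^ (1 / t)) atTop (𝓝 0) := by
    have h1 : Tendsto (fun N : ℕ => B / (N : ℝ)) atTop (𝓝 0) :=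
      tendsto_const_div_atTop_nhds_zero_nat B
    have h2 := h1.rpow_const (p := 1 / t) (Or.inr (by positivity))
    rwa [Real.zero_rpow (by positivity)] at h2
  have hpos : 0 < (1 - x) / 2 := by linarith
  obtain ⟨N, hN1, hN2⟩ := ((hlim.eventually (gt_mem_nhds hpos)).and (eventually_gt_atTop 0)).exists
  refine ⟨N, hN2, ?_⟩
  intro V _ P I _ w A hw0 hw hε
  have hN' : (0 : ℝ) < N := by exact_mod_cast hN2
  have h1 : ∀ M : ℕ, ∑ i, w i * P.psi (A i) ≤ ((B / N) ^ (1 / t) * P.psi Set.univ) * (1 / (1 - x)) +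
        (1 / (2 * N) * ∑ v, P.psi {v}) * (1 / 2) ^ M := by
    intro M
    have := kms_iter ht hB P N hN2 x hx hx1 M 0 I w A hw0 hw (by simpa using hε)
    refine this.trans (le_of_eq ?_)
    simp
    ring
  have h2 : Tendsto (fun M : ℕ => ((B / N) ^ (1 / t) * P.psi Set.univ) * (1 / (1 - x)) +
        (1 / (2 * N) * ∑ v, P.psi {v}) * (1 / 2 : ℝ) ^ M) atTop
        (𝓝 (((B / N) ^ (1 / t) * P.psi Set.univ) * (1 / (1 - x)) +
        (1 / (2 * N) * ∑ v, P.psi {v}) * 0)) :=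
    ((_root_.tendsto_pow_atTop_nhds_zero_of_lt_one (by norm_num) (by norm_num)).const_mul _).const_add _
  have h3 := ge_of_tendsto' h2 h1
  refine h3.trans ?_
  have h4 : (B / N) ^ (1 / t) * (1 / (1 - x)) ≤ 1 / 2 := by
    rw [mul_one_div, div_le_iff₀ (by linarith)]
    linarith
  have := mul_le_mul_of_nonneg_right h4 (P.nonneg Set.univ)
  linarith

open Classical in
/-- Fractional covering lemma (quantitative Kalton-Roberts type). -/
theorem kms_cover (t B : ℝ) (ht : 1 ≤ t) (hB : 0 ≤ B) : ∃ C : ℝ, 0 < C ∧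
    ∀ (V : Type) [Fintype V] (P : KmsSub V t B) (J : Type) [Fintype J] (lam : J → ℝ)
      (A : J → Set V), (∀ j, 0 ≤ lam j) →
      (∀ v, 1 ≤ ∑ j, lam j * kmsInd (A j) v) →
      P.psi Set.univ ≤ C * ∑ j, lam j * P.psi (A j) := by
  obtain ⟨N, hN, h⟩ := kms_small t B ht hB
  have hN' : (0 : ℝ) < N := by exact_mod_cast hN
  refine ⟨4 * N, by positivity, ?_⟩
  intro V _ P J _ lam A hl hc
  set L : ℝ := 2 * N with hL
  have hL0 : 0 < L := by positivity
  set w : J → Bool → ℝ := fun j c => if c then 1 - Real.exp (-(L * lam j)) else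
    Real.exp (-(L * lam j)) with hw
  have hw0 : ∀ j c, 0 ≤ w j c := by
    intro j c
    have : Real.exp (-(L * lam j)) ≤ 1 := Real.exp_le_one_iff.2 (by
      have := hl j
      have : 0 ≤ L * lam j := by positivity
      linarith)
    cases c <;> simp [hw]
    · positivity
    · have := hl j
      positivity
  have hw1 : ∀ j, ∑ c, w j c = 1 := by intro j; simp [hw]
  set S : (J → Bool) → Set V := fun x => {v | ∃ j, x j = true ∧ v ∈ A j} with hS
  set W : (J → Bool) → ℝ := fun x => ∏ j, w j (x j) with hW
  have hW0 : ∀ x, 0 ≤ W x := fun x => Finset.prod_nonneg fun j _ => hw0 _ _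
  have hW1 : ∑ x, W x = 1 := kms_pi_tot w hw1
  have hbad : ∑ x, W x * P.psi (S x)ᶜ ≤ 1 / 2 * P.psi Set.univ := by
    refine h V P (J → Bool) W (fun x => (S x)ᶜ) hW0 hW1 ?_
    intro v
    have e1 : ∀ x, W x * kmsInd ((S x)ᶜ) v =
        ∏ j, (w j (x j) * (if x j = true ∧ v ∈ A j then 0 else 1)) := by
      intro x
      rw [Finset.prod_mul_distrib]
      congr 1
      by_cases hv : v ∈ S x
      · obtain ⟨j, h1, h2⟩ := hv
        have hv : v ∈ S x := ⟨j, h1, h2⟩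
        rw [kmsInd, if_neg (by simpa using hv)]
        exact (Finset.prod_eq_zero (Finset.mem_univ j) (by simp [h1, h2])).symm
      · rw [kmsInd, if_pos (by simpa using hv)]
        refine (Finset.prod_eq_one fun j _ => ?_).symm
        rw [if_neg]
        exact fun hj => hv ⟨j, hj⟩
    rw [Finset.sum_congr rfl (fun x _ => e1 x)]
    rw [← Fintype.prod_sum (fun j c => w j c * (if c = true ∧ v ∈ A j then 0 else 1))]
    have e2 : ∀ j, ∑ c, w j c * (if c = true ∧ v ∈ A j then 0 else 1) =
        Real.exp (-(L * (lam j * kmsInd (A j) v))) := by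
      intro j
      by_cases hv : v ∈ A j <;> simp [kmsInd, hw, hv]
    rw [Finset.prod_congr rfl (fun j _ => e2 j), ← Real.exp_sum, Finset.sum_neg_distrib,
      ← Finset.mul_sum]
    have e3 : L ≤ L * ∑ j, lam j * kmsInd (A j) v := by
      have := mul_le_mul_of_nonneg_left (hc v) hL0.le
      linarith
    rw [Real.exp_neg, ← one_div]
    have e4 := Real.add_one_le_exp (L * ∑ j, lam j * kmsInd (A j) v)
    exact one_div_le_one_div_of_le hL0 (by linarith)
  have hfin : ∀ T : Finset J, P.psi (⋃ j ∈ T, A j) ≤ ∑ j ∈ T, P.psi (A j) := by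
    intro T
    induction T using Finset.induction_on with
    | empty => simp [P.empty]
    | insert a s ha ih =>
      rw [Finset.sum_insert ha, Finset.set_biUnion_insert]
      exact (P.sub _ _).trans (by linarith)
  have hgood : ∑ x, W x * P.psi (S x) ≤ L * ∑ j, lam j * P.psi (A j) := by
    calc ∑ x, W x * P.psi (S x)
        ≤ ∑ x, W x * ∑ j, (if x j = true then 1 else 0) * P.psi (A j) := by
          gcongr with x
          · exact hW0 x
          have := hfin (Finset.univ.filter (fun j => x j = true))
          rw [Finset.sum_filter] at this
          simp only [ite_mul, one_mul, zero_mul]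
          refine le_trans (P.mono _ _ ?_) this
          rintro v ⟨j, h1, h2⟩
          simp only [Set.mem_iUnion]
          exact ⟨j, by simp [h1], h2⟩
      _ = ∑ j, (∑ x, W x * (if x j = true then 1 else 0)) * P.psi (A j) := by
          simp only [Finset.mul_sum, Finset.sum_mul]
          rw [Finset.sum_comm]
          simp only [mul_assoc]
      _ ≤ ∑ j, (L * lam j) * P.psi (A j) := by
          gcongr with j
          · exact P.nonneg _
          rw [kms_pi_one w hw1 (fun c => if c = true then 1 else 0) j]
          simp [hw]
          have := Real.add_one_le_exp (-(L * lam j))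
          linarith
      _ = _ := by simp only [Finset.mul_sum, mul_assoc]
  have htot : P.psi Set.univ ≤ ∑ x, W x * P.psi (S x) + ∑ x, W x * P.psi (S x)ᶜ := by
    rw [← Finset.sum_add_distrib]
    calc P.psi Set.univ = ∑ x, W x * P.psi Set.univ := by rw [← Finset.sum_mul, hW1, one_mul]
      _ ≤ _ := by
        refine Finset.sum_le_sum fun x _ => ?_
        rw [← mul_add]
        refine mul_le_mul_of_nonneg_left ?_ (hW0 x)
        have := P.sub (S x) (S x)ᶜ
        rwa [Set.union_compl_self] at this
  rw [hL] at hgood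
  linarith

theorem kms_bridge (p q b : ℝ) (hp : 0 < p) (hpq : p < q) : ∃ C : ℝ, 0 < C ∧
    ∀ (Ω : Type) [TopologicalSpace Ω] [MeasurableSpace Ω] (X : AdmissibleQuasinorm Ω),
      (∀ f g : Ω → ℝ, Measurable f → Measurable g →
          X.N (fun x => f x + g x) ^ p ≤ X.N f ^ p + X.N g ^ p) →
      CrudeLower X q b → ∀ h : Ω → ℝ, Measurable h → X.N h < ⊤ →
      ∀ (J : Type) [Fintype J] (A : J → Set Ω) (lam : J → ℝ), (∀ j, MeasurableSet (A j)) →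
      (∀ j, 0 ≤ lam j) → (∀ x, 1 ≤ ∑ j, lam j * kmsInd (A j) x) →
      (X.N h).toReal ^ p ≤ C * ∑ j, lam j * (X.N ((A j).indicator h)).toReal ^ p := by
  classical
  have hq : 0 < q := hp.trans hpq
  obtain ⟨C, hC, hcov⟩ := kms_cover (q / p) ((ENNReal.ofReal b).toReal ^ q)
    ((one_le_div hp).2 hpq.le) (by positivity)
  refine ⟨C, hC, ?_⟩
  intro Ω _ _ X hsub hlow h hh hfin J _ A lam hA hl hc
  set Φ : Ω → (J → Bool) := fun x j => decide (x ∈ A j) with hΦ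
  have hΦm : Measurable Φ := by
    refine measurable_pi_iff.2 fun j => measurable_to_bool ?_
    convert hA j using 1
    ext x
    simp [hΦ]
  set F := Set.rangeFactorization Φ with hF
  have hFm : ∀ T : Set (Set.range Φ), MeasurableSet (F ⁻¹' T) := by
    intro T
    have h1 : F ⁻¹' T = Φ ⁻¹' (Subtype.val '' T) := by
      ext x
      simp only [Set.mem_preimage, Set.mem_image]
      constructor
      · intro hx
        exact ⟨F x, hx, rfl⟩
      · rintro ⟨y, hy, hy2⟩
        have : F x = y := Subtype.ext hy2.symm
        rwa [this]
    rw [h1]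
    exact hΦm (Set.toFinite _).measurableSet
  have hle : ∀ T : Set Ω, MeasurableSet T → X.N (T.indicator h) ≤ X.N h := by
    intro T hT
    refine X.mono _ _ (hh.indicator hT) hh fun x => ?_
    by_cases hx : x ∈ T <;> simp [hx]
  have hlt : ∀ T : Set Ω, MeasurableSet T → X.N (T.indicator h) ≠ ⊤ := fun T hT =>
    ((hle T hT).trans_lt hfin).ne
  let P : KmsSub (Set.range Φ) (q / p) ((ENNReal.ofReal b).toReal ^ q) :=
    { psi := fun T => (X.N ((F ⁻¹' T).indicator h)).toReal ^ p
      nonneg := fun T => by positivity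
      empty := by
        have h0 := X.smul 0 h hh
        simp only [abs_zero, ENNReal.ofReal_zero, zero_mul] at h0
        have h1 : (F ⁻¹' (∅ : Set (Set.range Φ))).indicator h = fun _ => 0 := by
          ext x; simp
        rw [h1, h0]
        simp [hp.ne']
      mono := by
        intro S T hST
        refine Real.rpow_le_rpow ENNReal.toReal_nonneg ?_ hp.le
        refine ENNReal.toReal_mono (hlt _ (hFm T)) ?_
        refine X.mono _ _ (hh.indicator (hFm S)) (hh.indicator (hFm T)) fun x => ?_
        by_cases hx : x ∈ F ⁻¹' S
        · have hx2 : x ∈ F ⁻¹' T := hST hx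
          rw [Set.indicator_of_mem hx, Set.indicator_of_mem hx2]
        · rw [Set.indicator_of_notMem hx]
          simp
      sub := by
        intro S T
        have h1 := hsub _ _ (hh.indicator (hFm S)) (hh.indicator (hFm T))
        have h2 : X.N ((F ⁻¹' (S ∪ T)).indicator h) ≤
            X.N (fun x => (F ⁻¹' S).indicator h x + (F ⁻¹' T).indicator h x) := by
          refine X.mono _ _ (hh.indicator (hFm _))
            ((hh.indicator (hFm S)).add (hh.indicator (hFm T))) fun x => ?_
          by_cases hx : x ∈ F ⁻¹' S <;> by_cases hy : x ∈ F ⁻¹' T <;>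
            simp only [Set.preimage_union, Set.indicator, Set.mem_union, hx, hy, true_or, or_true,
              or_self, if_true, if_false, add_zero, zero_add, le_refl]
          rw [← two_mul, abs_mul, abs_two]
          linarith [abs_nonneg (h x)]
        have h3 := (ENNReal.rpow_le_rpow h2 hp.le).trans h1
        have h4 := ENNReal.toReal_mono (ENNReal.add_ne_top.2
          ⟨ENNReal.rpow_ne_top_of_nonneg hp.le (hlt _ (hFm S)),
            ENNReal.rpow_ne_top_of_nonneg hp.le (hlt _ (hFm T))⟩) h3
        rw [ENNReal.toReal_add (ENNReal.rpow_ne_top_of_nonneg hp.le (hlt _ (hFm S)))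
          (ENNReal.rpow_ne_top_of_nonneg hp.le (hlt _ (hFm T)))] at h4
        simpa only [ENNReal.toReal_rpow] using h4
      low := by
        intro K E hE
        have h1 := hlow K (fun k => (F ⁻¹' (E k)).indicator h) (fun k => hh.indicator (hFm _)) (by
          intro i j hij x
          by_cases hx : x ∈ F ⁻¹' (E i)
          · right
            refine Set.indicator_of_notMem ?_ _
            exact Set.disjoint_left.1 (hE i j hij) hx
          · left
            exact Set.indicator_of_notMem hx _)
        have h2 : X.N (fun x => ∑ k, (F ⁻¹' (E k)).indicator h x) ≤ X.N h := by
          refine X.mono _ _ (Finset.measurable_sum _ fun k _ => hh.indicator (hFm _)) hh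
            fun x => ?_
          by_cases hx : ∃ k, x ∈ F ⁻¹' (E k)
          · obtain ⟨k, hk⟩ := hx
            rw [Finset.sum_eq_single k, Set.indicator_of_mem hk]
            · intro j _ hj
              refine Set.indicator_of_notMem ?_ _
              exact Set.disjoint_left.1 (hE k j hj.symm) hk
            · simp
          · push Not at hx
            rw [Finset.sum_eq_zero fun k _ => Set.indicator_of_notMem (hx k) _]
            simp
        have h3 := h1.trans (mul_le_mul_right h2 (ENNReal.ofReal b))
        have h4 := ENNReal.rpow_le_rpow h3 hq.le
        rw [← ENNReal.rpow_mul, one_div_mul_cancel hq.ne', ENNReal.rpow_one,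
          ENNReal.mul_rpow_of_nonneg _ _ hq.le] at h4
        have h5 := ENNReal.toReal_mono (ENNReal.mul_ne_top
          (ENNReal.rpow_ne_top_of_nonneg hq.le ENNReal.ofReal_ne_top)
          (ENNReal.rpow_ne_top_of_nonneg hq.le hfin.ne)) h4
        rw [ENNReal.toReal_sum fun k _ => ENNReal.rpow_ne_top_of_nonneg hq.le (hlt _ (hFm _)),
          ENNReal.toReal_mul] at h5
        simp only [← ENNReal.toReal_rpow] at h5
        have h6 : ∀ y : ℝ, 0 ≤ y → (y ^ p) ^ (q / p) = y ^ q := by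
          intro y hy
          rw [← Real.rpow_mul hy, mul_div_cancel₀ _ hp.ne']
        simp only [h6 _ ENNReal.toReal_nonneg, Set.preimage_univ, Set.indicator_univ]
        exact h5 }
  have : Fintype (Set.range Φ) := Fintype.ofFinite _
  have key := hcov (Set.range Φ) P J lam (fun j => {v | v.1 j = true}) hl (by
    rintro ⟨_, x, rfl⟩
    refine (hc x).trans (le_of_eq ?_)
    refine Finset.sum_congr rfl fun j _ => ?_
    congr 1
    by_cases hx : x ∈ A j <;> simp [kmsInd, hx, hΦ])
  have e1 : P.psi Set.univ = (X.N h).toReal ^ p := by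
    simp only [P, Set.preimage_univ, Set.indicator_univ]
  have e2 : ∀ j, P.psi {v | v.1 j = true} = (X.N ((A j).indicator h)).toReal ^ p := by
    intro j
    have : F ⁻¹' {v | v.1 j = true} = A j := by
      ext x
      simp [hF, hΦ, Set.rangeFactorization]
    simp only [P, this]
  simpa only [e1, e2] using key

theorem kms_dyadic (d : ℝ) (hd : 0 < d) (ρ : ℝ) (K : ℕ) (h : ρ < 2 ^ K * d) :
    (ρ - d) / 2 ≤ ∑ k ∈ Finset.range K, 2 ^ k * d * (if 2 ^ k * d ≤ ρ then 1 else 0) := by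
  induction K with
  | zero =>
    simp at h ⊢
    linarith
  | succ K ih =>
    rw [Finset.sum_range_succ]
    by_cases h1 : 2 ^ K * d ≤ ρ
    · rw [if_pos h1]
      have : 0 ≤ ∑ k ∈ Finset.range K, 2 ^ k * d * (if 2 ^ k * d ≤ ρ then (1 : ℝ) else 0) :=
        Finset.sum_nonneg fun k _ => mul_nonneg (by positivity) (by split_ifs <;> norm_num)
      rw [pow_succ] at h
      linarith
    · rw [if_neg h1]
      have := ih (not_le.1 h1)
      linarith

theorem kms_finite {Ω : Type} [TopologicalSpace Ω] [MeasurableSpace Ω] (X : AdmissibleQuasinorm Ω)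
    (p : ℝ) (hp : 0 < p)
    (hsub : ∀ f g : Ω → ℝ, Measurable f → Measurable g →
          X.N (fun x => f x + g x) ^ p ≤ X.N f ^ p + X.N g ^ p) (h0 : X.N (fun _ => 0) = 0)
    {ι : Type} (s : Finset ι) (f : ι → Ω → ℝ) (hf : ∀ i, Measurable (f i))
    (hfin : ∀ i, X.N (f i) < ⊤) : X.N (fun x => ∑ i ∈ s, |f i x|) < ⊤ := by
  classical
  induction s using Finset.induction_on with
  | empty => simp [h0]
  | insert a s ha ih =>
    simp only [Finset.sum_insert ha]
    have hm : Measurable (fun x => |f a x|) := (hf a).abs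
    have h1 := hsub (fun x => |f a x|) (fun x => ∑ i ∈ s, |f i x|) hm
      (Finset.measurable_sum _ fun i _ => (hf i).abs)
    have h2 : X.N (fun x => |f a x|) < ⊤ :=
      (X.mono _ _ hm (hf a) (fun x => by simp)).trans_lt (hfin a)
    have h3 := h1.trans_lt (ENNReal.add_lt_top.2
      ⟨ENNReal.rpow_lt_top_of_nonneg hp.le h2.ne, ENNReal.rpow_lt_top_of_nonneg hp.le ih.ne⟩)
    exact (ENNReal.rpow_lt_top_iff_of_pos hp).1 h3

theorem kms_real (p q r b : ℝ) (hp : 0 < p) (hpq : p < q) (hr0 : 0 < r) (hrp : r < p) :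
    ∃ D : ℝ, 0 ≤ D ∧
      ∀ (Ω : Type) [TopologicalSpace Ω] [MeasurableSpace Ω] (X : AdmissibleQuasinorm Ω),
        (∀ f g : Ω → ℝ, Measurable f → Measurable g →
          X.N (fun x => f x + g x) ^ p ≤ X.N f ^ p + X.N g ^ p) →
        CrudeLower X q b →
        ∀ (n : ℕ) (f : Fin n → Ω → ℝ) (a : Fin n → ℝ), (∀ i, Measurable (f i)) → (∀ i, 0 < a i) →
          (∀ i, X.N (f i) ≤ ENNReal.ofReal (a i)) →
          X.N (fun x => (∑ i, |f i x| ^ r) ^ (1 / r)) ≤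
            ENNReal.ofReal (D * (∑ i, a i ^ r) ^ (1 / r)) := by
  obtain ⟨C, hC, hbr⟩ := kms_bridge p q b hp hpq
  set s : ℝ := p / r with hs
  have hs1 : 1 < s := (one_lt_div hr0).2 hrp
  set z : ℝ := 2 * (1 / 2) ^ s with hz
  have hz0 : 0 ≤ z := by positivity
  have hz1 : z < 1 := by
    have : ((1 : ℝ) / 2) ^ s < (1 / 2) ^ (1 : ℝ) :=
      Real.rpow_lt_rpow_of_exponent_gt (by norm_num) (by norm_num) hs1
    rw [Real.rpow_one] at this
    linarith
  have hz2 : 0 < 1 - z := by linarith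
  refine ⟨(C * (2 / (1 - z) * 2 ^ s)) ^ (1 / p), by positivity, ?_⟩
  intro Ω _ _ X hsub hlow n f a hf ha hN
  have hr1 : 0 < 1 / r := by positivity
  have h0 : X.N (fun _ => 0) = 0 := by
    obtain ⟨u, hu, -⟩ := X.exists_pos
    have h0 := X.smul 0 u hu
    simpa only [abs_zero, ENNReal.ofReal_zero, zero_mul] using h0
  rcases Nat.eq_zero_or_pos n with hn | hn
  · subst hn
    simp only [Finset.univ_eq_empty, Finset.sum_empty]
    rw [Real.zero_rpow hr1.ne', h0]
    exact zero_le
  have : Nonempty (Fin n) := ⟨⟨0, hn⟩⟩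
  set S : ℝ := ∑ i, a i ^ r with hS
  have har : ∀ i, 0 < a i ^ r := fun i => Real.rpow_pos_of_pos (ha i) r
  have hS0 : 0 < S := Finset.sum_pos (fun i _ => har i) Finset.univ_nonempty
  set H : Ω → ℝ := fun x => ∑ i, |f i x| ^ r with hH
  have hym : ∀ i, Measurable fun x => |f i x| ^ r := fun i => (hf i).abs.pow_const r
  have hHm : Measurable H := Finset.measurable_sum _ fun i _ => hym i
  have hy0 : ∀ i x, 0 ≤ |f i x| ^ r := fun i x => by positivity
  have hH0 : ∀ x, 0 ≤ H x := fun x => Finset.sum_nonneg fun i _ => hy0 i x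
  set h : Ω → ℝ := fun x => H x ^ (1 / r) with hh
  have hhm : Measurable h := hHm.pow_const _
  have hh0 : ∀ x, 0 ≤ h x := fun x => Real.rpow_nonneg (hH0 x) _
  have hfin : X.N h < ⊤ := by
    have h1 := kms_finite X p hp hsub h0 Finset.univ f hf
      (fun i => (hN i).trans_lt ENNReal.ofReal_lt_top)
    have hm : Measurable (fun x => ∑ i, |f i x|) := Finset.measurable_sum _ fun i _ => (hf i).abs
    have h2 := X.smul ((n : ℝ) ^ (1 / r)) _ hm
    have h3 : X.N h ≤ X.N (fun x => (n : ℝ) ^ (1 / r) * ∑ i, |f i x|) := by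
      refine X.mono _ _ hhm (hm.const_mul _) fun x => ?_
      have hs0 : 0 ≤ ∑ i, |f i x| := Finset.sum_nonneg fun i _ => abs_nonneg _
      rw [abs_of_nonneg (hh0 x), abs_of_nonneg (by positivity)]
      have h4 : H x ≤ n * (∑ i, |f i x|) ^ r := by
        calc H x ≤ ∑ i : Fin n, (∑ i, |f i x|) ^ r := by
              refine Finset.sum_le_sum fun i _ => Real.rpow_le_rpow (abs_nonneg _) ?_ hr0.le
              exact Finset.single_le_sum (f := fun i => |f i x|) (fun j _ => abs_nonneg _)
                (Finset.mem_univ i)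
          _ = _ := by simp
      calc h x ≤ (n * (∑ i, |f i x|) ^ r) ^ (1 / r) := Real.rpow_le_rpow (hH0 x) h4 hr1.le
        _ = _ := by
          rw [Real.mul_rpow (by positivity) (by positivity), ← Real.rpow_mul hs0,
            mul_one_div_cancel hr0.ne', Real.rpow_one]
    refine h3.trans_lt ?_
    rw [h2]
    exact ENNReal.mul_lt_top ENNReal.ofReal_lt_top h1
  set d : Fin n → ℝ := fun i => a i ^ r / (2 * S) with hd
  have hd0 : ∀ i, 0 < d i := fun i => by
    have := har i
    positivity
  have hdsum : ∑ i, d i = 1 / 2 := by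
    rw [hd, ← Finset.sum_div, ← hS]
    field_simp
  obtain ⟨K, hK⟩ : ∃ K : ℕ, ∀ i, 1 < 2 ^ K * d i := by
    have h1 : ∀ i, ∀ᶠ K : ℕ in atTop, 1 < 2 ^ K * d i := fun i =>
      ((tendsto_pow_atTop_atTop_of_one_lt (one_lt_two (α := ℝ))).atTop_mul_const
        (hd0 i)).eventually_gt_atTop 1
    exact (eventually_all.2 h1).exists
  set A : Fin n × Fin K → Set Ω := fun j => {x | 2 ^ (j.2 : ℕ) * d j.1 * H x ≤ |f j.1 x| ^ r}
    with hA
  have hAm : ∀ j, MeasurableSet (A j) := fun j =>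
    measurableSet_le (hHm.const_mul _) (hym j.1)
  have key := hbr Ω X hsub hlow h hhm hfin (Fin n × Fin K) A
    (fun j => 4 * (2 ^ (j.2 : ℕ) * d j.1)) hAm (fun j => by
      have := hd0 j.1
      positivity) (by
    intro x
    -- choose the ratios
    obtain ⟨ρ, hρ1, hρs, hρA⟩ : ∃ ρ : Fin n → ℝ, (∀ i, ρ i ≤ 1) ∧ ∑ i, ρ i = 1 ∧
        ∀ (i : Fin n) (k : ℕ), 2 ^ k * d i ≤ ρ i → 2 ^ k * d i * H x ≤ |f i x| ^ r := by
      rcases (hH0 x).eq_or_lt with hx | hx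
      · refine ⟨fun i => 2 * d i, ?_, ?_, ?_⟩
        · intro i
          have := Finset.single_le_sum (f := d) (fun j _ => (hd0 j).le) (Finset.mem_univ i)
          linarith
        · rw [← Finset.mul_sum, hdsum]; norm_num
        · intro i k _
          rw [← hx, mul_zero]
          exact hy0 i x
      · refine ⟨fun i => |f i x| ^ r / H x, ?_, ?_, ?_⟩
        · intro i
          rw [div_le_one hx]
          exact Finset.single_le_sum (f := fun i => |f i x| ^ r) (fun j _ => hy0 j x)
            (Finset.mem_univ i)
        · rw [← Finset.sum_div]
          exact div_self hx.ne'
        · intro i k hk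
          rwa [le_div_iff₀ hx] at hk
    rw [Fintype.sum_prod_type]
    calc (1 : ℝ) = ∑ i, 4 * ((ρ i - d i) / 2) := by
          rw [← Finset.mul_sum, ← Finset.sum_div, Finset.sum_sub_distrib, hρs, hdsum]
          norm_num
      _ ≤ ∑ i, ∑ k : Fin K, 4 * (2 ^ (k : ℕ) * d i) * kmsInd (A (i, k)) x := by
          refine Finset.sum_le_sum fun i _ => ?_
          have h1 := kms_dyadic (d i) (hd0 i) (ρ i) K ((hρ1 i).trans_lt (hK i))
          rw [Finset.sum_range] at h1
          simp only [mul_assoc (4 : ℝ)]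
          rw [← Finset.mul_sum]
          refine mul_le_mul_of_nonneg_left (h1.trans ?_) (by norm_num)
          refine Finset.sum_le_sum fun k _ => ?_
          have := hd0 i
          refine mul_le_mul_of_nonneg_left ?_ (by positivity)
          by_cases hk : 2 ^ (k : ℕ) * d i ≤ ρ i
          · have hx : x ∈ A (i, k) := hρA i k hk
            simp [kmsInd, hx, hk]
          · rw [if_neg hk]
            exact kmsInd_nonneg _ _)
  have hpsi : ∀ j, (X.N ((A j).indicator h)).toReal ^ p ≤ (2 * S) ^ s * ((1 / 2) ^ s) ^ (j.2 : ℕ) := by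
    rintro ⟨i, k⟩
    have hdi := hd0 i
    set c : ℝ := (2 ^ (k : ℕ) * d i)⁻¹ with hc
    have hc0 : 0 < c := by positivity
    have h1 : X.N ((A (i, k)).indicator h) ≤ X.N (fun x => c ^ (1 / r) * f i x) := by
      refine X.mono _ _ (hhm.indicator (hAm _)) ((hf i).const_mul _) fun x => ?_
      by_cases hx : x ∈ A (i, k)
      · rw [Set.indicator_of_mem hx, abs_of_nonneg (hh0 x), abs_mul,
          abs_of_nonneg (by positivity : 0 ≤ c ^ (1 / r))]
        have hx' : 2 ^ (k : ℕ) * d i * H x ≤ |f i x| ^ r := hx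
        have h2 : H x ≤ c * |f i x| ^ r := by
          rw [hc, ← div_eq_inv_mul, le_div_iff₀ (by positivity)]
          linarith
        calc h x ≤ (c * |f i x| ^ r) ^ (1 / r) := Real.rpow_le_rpow (hH0 x) h2 hr1.le
          _ = _ := by
            rw [Real.mul_rpow hc0.le (hy0 i x), ← Real.rpow_mul (abs_nonneg _),
              mul_one_div_cancel hr0.ne', Real.rpow_one]
      · rw [Set.indicator_of_notMem hx, abs_zero]
        exact abs_nonneg _
    rw [X.smul _ _ (hf i), abs_of_nonneg (by positivity : 0 ≤ c ^ (1 / r))] at h1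
    have h2 := h1.trans (mul_le_mul_right (hN i) _)
    rw [← ENNReal.ofReal_mul (by positivity)] at h2
    have h3 := ENNReal.toReal_le_of_le_ofReal (mul_nonneg (by positivity) (ha i).le) h2
    have h4 : (c ^ (1 / r) * a i) ^ p = (2 * S) ^ s * ((1 / 2) ^ s) ^ (k : ℕ) := by
      have e1 : c ^ (1 / r) * a i = (2 * S * (1 / 2) ^ (k : ℕ)) ^ (1 / r) := by
        have e2 : 2 * S * (1 / 2) ^ (k : ℕ) = c * a i ^ r := by
          have := (har i).ne'
          rw [hc, hd, one_div, inv_pow]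
          field_simp
        rw [e2, Real.mul_rpow hc0.le (har i).le, ← Real.rpow_mul (ha i).le,
          mul_one_div_cancel hr0.ne', Real.rpow_one]
      rw [e1, ← Real.rpow_mul (by positivity), one_div_mul_eq_div, ← hs,
        Real.mul_rpow (by positivity) (by positivity)]
      congr 1
      rw [← Real.rpow_natCast, ← Real.rpow_natCast, ← Real.rpow_mul (by norm_num),
        ← Real.rpow_mul (by norm_num), mul_comm]
    rw [← h4]
    exact Real.rpow_le_rpow ENNReal.toReal_nonneg h3 hp.le
  have hsum : ∑ j : Fin n × Fin K, 4 * (2 ^ (j.2 : ℕ) * d j.1) *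
      (X.N ((A j).indicator h)).toReal ^ p ≤ 2 / (1 - z) * 2 ^ s * S ^ s := by
    rw [Fintype.sum_prod_type]
    have hgeo : ∑ k : Fin K, z ^ (k : ℕ) ≤ 1 / (1 - z) := by
      rw [← Finset.sum_range (fun k => z ^ k), one_div, ← tsum_geometric_of_lt_one hz0 hz1]
      exact (summable_geometric_of_lt_one hz0 hz1).sum_le_tsum _ (fun k _ => by positivity)
    calc _ ≤ ∑ i, ∑ k : Fin K, 4 * (2 ^ (k : ℕ) * d i) * ((2 * S) ^ s * ((1 / 2) ^ s) ^ (k : ℕ)) := by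
          refine Finset.sum_le_sum fun i _ => Finset.sum_le_sum fun k _ => ?_
          have := hd0 i
          exact mul_le_mul_of_nonneg_left (hpsi (i, k)) (by positivity)
      _ = ∑ i, d i * (4 * (2 * S) ^ s * ∑ k : Fin K, z ^ (k : ℕ)) := by
          refine Finset.sum_congr rfl fun i _ => ?_
          rw [← mul_assoc, Finset.mul_sum Finset.univ (fun k : Fin K => z ^ (k : ℕ))]
          refine Finset.sum_congr rfl fun k _ => ?_
          rw [hz, mul_pow]
          ring
      _ = 2 * (2 * S) ^ s * ∑ k : Fin K, z ^ (k : ℕ) := by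
          rw [← Finset.sum_mul, hdsum]
          ring
      _ ≤ 2 * (2 * S) ^ s * (1 / (1 - z)) := by gcongr
      _ = _ := by
          rw [Real.mul_rpow (by norm_num) hS0.le]
          ring
  have hfinal : (X.N h).toReal ^ p ≤ C * (2 / (1 - z) * 2 ^ s) * S ^ s :=
    (key.trans (mul_le_mul_of_nonneg_left hsum hC.le)).trans (le_of_eq (by ring))
  have hfinal2 : (X.N h).toReal ≤ (C * (2 / (1 - z) * 2 ^ s)) ^ (1 / p) * S ^ (1 / r) := by
    refine (Real.rpow_le_rpow_iff ENNReal.toReal_nonneg (by positivity) hp).1 ?_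
    refine hfinal.trans (le_of_eq ?_)
    rw [Real.mul_rpow (by positivity) (by positivity), ← Real.rpow_mul (by positivity),
      ← Real.rpow_mul hS0.le, one_div_mul_cancel hp.ne', Real.rpow_one, one_div_mul_eq_div]
  exact (ENNReal.le_ofReal_iff_toReal_le hfin.ne (by positivity)).2 hfinal2

/-- If an admissible quasinorm is `p`-normable and satisfies a crude lower
`q`-estimate with constant `b` (`0 < p < q < ∞`), then for every `0 < r < p` the space is
`r`-convex, with the `r`-convexity constant depending only on `p, q, r, b`. -/
theorem pNormable_crude_lower_estimate_rConvex
    (p q r b : ℝ) (hp : 0 < p) (hpq : p < q) (hr0 : 0 < r) (hrp : r < p) :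
    ∃ M : ℝ≥0∞, M < ⊤ ∧
      ∀ (Ω : Type) [TopologicalSpace Ω] [CompactSpace Ω] [T2Space Ω]
        [MeasurableSpace Ω] [BorelSpace Ω] (X : AdmissibleQuasinorm Ω),
        (∀ f g : Ω → ℝ, Measurable f → Measurable g →
          X.N (fun x => f x + g x) ^ p ≤ X.N f ^ p + X.N g ^ p) →
        CrudeLower X q b →
        ∀ (n : ℕ) (f : Fin n → Ω → ℝ), (∀ i, Measurable (f i)) →
          (∀ i, X.N (f i) < ⊤) →
          X.N (fun x => (∑ i, |f i x| ^ r) ^ (1 / r)) ≤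
            M * (∑ i, X.N (f i) ^ r) ^ (1 / r) := by
  obtain ⟨D, hD, hmain⟩ := kms_real p q r b hp hpq hr0 hrp
  refine ⟨ENNReal.ofReal D, ENNReal.ofReal_lt_top, ?_⟩
  intro Ω _ _ _ _ _ X hsub hlow n f hf hfin
  have hr1 : 0 < 1 / r := by positivity
  have h1 : ∀ η ∈ Ioi (0 : ℝ), X.N (fun x => (∑ i, |f i x| ^ r) ^ (1 / r)) ≤
      ENNReal.ofReal (D * (∑ i, ((X.N (f i)).toReal + η) ^ r) ^ (1 / r)) := by
    intro η hη
    have hη' : 0 < η := hη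
    refine hmain Ω X hsub hlow n f (fun i => (X.N (f i)).toReal + η) hf
      (fun i => by positivity) (fun i => ?_)
    rw [ENNReal.le_ofReal_iff_toReal_le (hfin i).ne (by positivity)]
    linarith
  have hcont : Continuous fun η : ℝ =>
      ENNReal.ofReal (D * (∑ i, ((X.N (f i)).toReal + η) ^ r) ^ (1 / r)) := by
    refine ENNReal.continuous_ofReal.comp (continuous_const.mul ?_)
    refine Continuous.rpow_const ?_ (fun _ => Or.inr hr1.le)
    refine continuous_finsetSum _ fun i _ => ?_
    exact (continuous_const.add continuous_id).rpow_const (fun _ => Or.inr hr0.le)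
  have h2 := ge_of_tendsto ((hcont.tendsto 0).mono_left nhdsWithin_le_nhds)
    (eventually_of_mem (self_mem_nhdsWithin (s := Ioi (0 : ℝ))) h1)
  refine h2.trans (le_of_eq ?_)
  rw [ENNReal.ofReal_mul hD]
  congr 1
  simp only [add_zero]
  rw [← ENNReal.ofReal_rpow_of_nonneg (Finset.sum_nonneg fun i _ => by positivity) hr1.le,
    ENNReal.ofReal_sum_of_nonneg (fun i _ => by positivity)]
  congr 1
  refine Finset.sum_congr rfl fun i _ => ?_
  rw [← ENNReal.ofReal_rpow_of_nonneg ENNReal.toReal_nonneg hr0.le, ENNReal.ofReal_toReal (hfin i).ne]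
end
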